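/- arXiv:2506.18761 — 8 statements merged into one kernel-verified Lean document; each statement's English description precedes it below -/
import Mathlib

section
/- Let p ≥ 28 be a real number and set x⋆ = p − 1. Then for every x in the interval [x⋆ − x⋆^{2/3}, x⋆ + x⋆^{2/3}], one has (1/4) · x⋆^{p−1} e^{−x⋆} · exp(−(x − x⋆)²/(2x⋆)) ≤ x^{p−1} e^{−x} ≤ 4 · x⋆^{p−1} e^{−x⋆} · exp(−(x − x⋆)²/(2x⋆)). -/
/-!
Put `n = p - 1` and `x = n (1 + u)`. Then
`x ^ n * exp (-x) = n ^ n * exp (-n) * exp (-n u² / 2) * exp E` with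
`E = n (log (1 + u) - u + u² / 2)`. On the window, `n |u|³ ≤ 1`, which together with `n ≥ 27`
gives `|u| ≤ 1/3`. Hence the cubic Taylor remainder `E` satisfies `|E| ≤ 1`
(`abs_cubic_remainder_le`), and `exp 1 < 4` yields both bounds.
-/

/-- The remainder bound of Mathlib applied at order two only gives the constant
`1 / (1 - 1/3) = 3/2 > log 4`; expanding to order three gives `1/3 + 1/2 = 5/6`. -/
lemma abs_cubic_remainder_le {n u : ℝ} (hn : 0 < n) (hu : |u| ≤ 1 / 3)
    (hnu : n * |u| ^ 3 ≤ 1) : |n * (Real.log (1 + u) - u + u ^ 2 / 2)| ≤ 1 := by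
  have h := Real.abs_log_sub_add_sum_range_le (x := -u) (by rw [abs_neg]; linarith) 3
  rw [abs_neg, sub_neg_eq_add] at h
  norm_num [Finset.sum_range_succ] at h
  have hu0 := abs_nonneg u
  have h4 : |u| ^ 4 / (1 - |u|) ≤ |u| ^ 3 / 2 := by
    rw [div_le_iff₀ (by linarith)]
    nlinarith [pow_nonneg hu0 3]
  have hcube : |u ^ 3 / 3| = |u| ^ 3 / 3 := by
    rw [abs_div, abs_pow]; norm_num
  have key : |Real.log (1 + u) - u + u ^ 2 / 2| ≤ |u| ^ 3 := by
    have h3 := abs_le.1 (h.trans h4)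
    have h5 := abs_le.1 hcube.le
    have h6 := pow_nonneg hu0 3
    have h7 : (-u) ^ 3 = -u ^ 3 := by ring
    rw [h7] at h3
    rw [abs_le]
    constructor <;> linarith [h3.1, h3.2, h5.1, h5.2]
  rw [abs_mul, abs_of_pos hn]
  exact (mul_le_mul_of_nonneg_left key hn.le).trans hnu

/-- **Subgaussian bounds for the integrand of the lower incomplete Gamma function near
its maximizer.** For `p ≥ 28` and `x⋆ = p - 1`, for every
`x ∈ [x⋆ - x⋆^(2/3), x⋆ + x⋆^(2/3)]`,
`(1/4)·x⋆^(p-1) e^(-x⋆) exp(-(x-x⋆)²/(2x⋆)) ≤ x^(p-1) e^(-x)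
  ≤ 4·x⋆^(p-1) e^(-x⋆) exp(-(x-x⋆)²/(2x⋆))`. -/
theorem subgaussian_bounds_gamma_integrand (p : ℝ) (hp : 28 ≤ p) (x : ℝ)
    (hx : x ∈ Set.Icc ((p - 1) - (p - 1) ^ ((2 : ℝ) / 3))
        ((p - 1) + (p - 1) ^ ((2 : ℝ) / 3))) :
    (1 / 4) * (p - 1) ^ (p - 1) * Real.exp (-(p - 1)) *
        Real.exp (-(x - (p - 1)) ^ 2 / (2 * (p - 1))) ≤ x ^ (p - 1) * Real.exp (-x) ∧
    x ^ (p - 1) * Real.exp (-x) ≤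
      4 * (p - 1) ^ (p - 1) * Real.exp (-(p - 1)) *
        Real.exp (-(x - (p - 1)) ^ 2 / (2 * (p - 1))) := by
  obtain ⟨n, hn⟩ : ∃ n, n = p - 1 := ⟨_, rfl⟩
  rw [← hn] at hx ⊢
  have hn27 : 27 ≤ n := by linarith
  have hn0 : 0 < n := by linarith
  obtain ⟨u, hu⟩ : ∃ u, u = (x - n) / n := ⟨_, rfl⟩
  have hxu : x = n * (1 + u) := by rw [hu]; field_simp; ring
  have hd : |n * u| ≤ n ^ ((2 : ℝ) / 3) := by
    rw [abs_le]
    constructor <;> nlinarith [hx.1, hx.2]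
  have hnu : n * |u| ^ 3 ≤ 1 := by
    have h := pow_le_pow_left₀ (abs_nonneg _) hd 3
    rw [← Real.rpow_natCast (n ^ ((2 : ℝ) / 3)), ← Real.rpow_mul hn0.le, abs_mul,
      abs_of_pos hn0] at h
    norm_num at h
    have h2 : n ^ 2 * (n * |u| ^ 3) ≤ n ^ 2 * 1 := by
      calc n ^ 2 * (n * |u| ^ 3) = (n * |u|) ^ 3 := by ring
        _ ≤ n ^ 2 * 1 := by rw [mul_one]; exact h
    exact le_of_mul_le_mul_left h2 (by positivity)
  have hu3 : |u| ≤ 1 / 3 := by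
    refine le_of_pow_le_pow_left₀ (n := 3) (by norm_num) (by norm_num) ?_
    nlinarith [pow_nonneg (abs_nonneg u) 3]
  have hE := abs_le.1 (abs_cubic_remainder_le hn0 hu3 hnu)
  obtain ⟨E, hEdef⟩ : ∃ E, E = n * (Real.log (1 + u) - u + u ^ 2 / 2) := ⟨_, rfl⟩
  rw [← hEdef] at hE
  have hu1 : 0 < 1 + u := by linarith [(abs_le.1 hu3).1]
  have hfac : x ^ n * Real.exp (-x) =
      n ^ n * Real.exp (-n) * Real.exp (-(x - n) ^ 2 / (2 * n)) * Real.exp E := by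
    have hq : -(x - n) ^ 2 / (2 * n) = -(n * u ^ 2 / 2) := by
      rw [hxu]; field_simp; ring
    rw [hq, hxu, Real.mul_rpow hn0.le hu1.le, Real.rpow_def_of_pos hu1]
    simp only [mul_assoc, ← Real.exp_add]
    congr 2
    rw [hEdef]; ring
  have hup : Real.exp E ≤ 4 := by
    linarith [Real.exp_le_exp.2 hE.2, Real.exp_one_lt_d9]
  have hlo : 1 / 4 ≤ Real.exp E := by
    have h1 : (1 : ℝ) / 4 ≤ Real.exp (-1) := by
      rw [Real.exp_neg, ← one_div]
      exact one_div_le_one_div_of_le (Real.exp_pos 1) (by linarith [Real.exp_one_lt_d9])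
    exact h1.trans (Real.exp_le_exp.2 hE.1)
  have hG : 0 ≤ n ^ n * Real.exp (-n) * Real.exp (-(x - n) ^ 2 / (2 * n)) := by positivity
  rw [hfac]
  constructor
  · linarith [mul_le_mul_of_nonneg_left hlo hG]
  · linarith [mul_le_mul_of_nonneg_left hup hG]
end

section
/- Let D > 192 be an integer and σ, R > 0 with R² > σ²(D−3). Set s⋆ = √(R² − σ²(D−3)), ν² = σ⁴(D−3)/(2s⋆²), and C(D) = ((D−3)/2)^{(D−3)/2} e^{−(D−3)/2} / Γ((D−1)/2). Suppose σ² √D ≤ s⋆² ≤ 3σ²D. Then for every s with |s − s⋆| ≤ (1/3) σ (D−3)^{1/6}, the function −h'(s) = (1/Γ((D−1)/2)) · (s/σ²) · ((R²−s²)/(2σ²))^{(D−3)/2} · e^{−(R²−s²)/(2σ²)} satisfies (1/(8e)) · C(D) · (s⋆/σ²) · exp(−(s−s⋆)²/(2ν²)) ≤ −h'(s) ≤ 6e · C(D) · (s⋆/σ²) · exp(−(s−s⋆)²/(2ν²)). -/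
/-!
Put `n = D - 3`, `a = s⋆/σ`, `d = (s - s⋆)/σ` and `x = (2ad + d²)/n`. Since
`R² = s⋆² + σ²n`, one has `(R² - s²)/(2σ²) = (n/2)(1 - x)`, and hence exactly
`-h'(s) = C(D) · (s/σ²) · exp((n/2)(log(1 - x) + x))` (`negDH_eq`), while the Gaussian
exponent is `(s - s⋆)²/(2ν²) = a²d²/n`. It remains to compare both exponents and to
compare `s` with `s⋆`.

Write `n = m⁶`. The hypotheses give `|d| ≤ m/3`, `m³ ≤ a²` and `a ≤ (7/4)m³`. Expanding
`log(1 - x)` to second order, the quadratic term `-(n/2)x²/2` produces `-a²d²/n` and the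
small corrections `-ad³/n` and `-d⁴/(4n)`, and the cubic remainder is bounded because
`n|x|³` is; altogether the exponents differ by at most `2` (`exponent_bound`). The bound
`|d| ≤ a/3` gives `(2/3)s⋆ ≤ s ≤ (4/3)s⋆`, and `(2/3)e⁻² ≥ 1/(8e)`, `(4/3)e² ≤ 6e`.
-/

/-- The negative derivative `-h'(s)` of
`h(s) = P[χ²_{D-1} ≤ (R² - s²)/σ²]`, valid for `0 < s < R`:
`-h'(s) = (1/Γ((D-1)/2)) · (s/σ²) · ((R²-s²)/(2σ²))^((D-3)/2) · e^(-(R²-s²)/(2σ²))`. -/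
noncomputable def negDH (D : ℕ) (σ R : ℝ) (s : ℝ) : ℝ :=
  (1 / Real.Gamma (((D : ℝ) - 1) / 2)) * (s / σ ^ 2) *
    ((R ^ 2 - s ^ 2) / (2 * σ ^ 2)) ^ (((D : ℝ) - 3) / 2) *
    Real.exp (-((R ^ 2 - s ^ 2) / (2 * σ ^ 2)))

/-- `C(D) = ((D-3)/2)^((D-3)/2) e^(-(D-3)/2) / Γ((D-1)/2)`. -/
noncomputable def CofD (D : ℕ) : ℝ :=
  (((D : ℝ) - 3) / 2) ^ (((D : ℝ) - 3) / 2) * Real.exp (-(((D : ℝ) - 3) / 2)) /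
    Real.Gamma (((D : ℝ) - 1) / 2)

/-- The relative deviation `x = (2ad + d²)/m⁶` is of order `m⁻²`. -/
lemma relative_deviation_bound {m a d : ℝ} (hm : 2 ≤ m) (hm6 : 190 ≤ m ^ 6) (ha : 0 < a)
    (ha' : a ≤ 7 / 4 * m ^ 3) (hd : |d| ≤ m / 3) :
    |(2 * a * d + d ^ 2) / m ^ 6| ≤ 6 / 5 / m ^ 2 ∧ 6 / 5 / m ^ 2 ≤ 6 / 25 := by
  have hm0 : 0 < m := by linarith
  have hm2 : 5 ≤ m ^ 2 := by
    by_contra! h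
    have : (m ^ 2) ^ 3 < 5 ^ 3 := by gcongr
    nlinarith
  constructor
  · have h1 : |2 * a * d + d ^ 2| ≤ 2 * (7 / 4 * m ^ 3) * (m / 3) + (m / 3) ^ 2 := by
      calc |2 * a * d + d ^ 2| ≤ |2 * a * d| + |d ^ 2| := abs_add_le _ _
        _ = 2 * a * |d| + |d| ^ 2 := by
          rw [abs_mul, abs_pow, abs_of_pos (by positivity : 0 < 2 * a)]
        _ ≤ _ := by gcongr
    rw [abs_div, abs_of_pos (by positivity : 0 < m ^ 6),
      div_le_div_iff₀ (by positivity) (by positivity)]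
    calc |2 * a * d + d ^ 2| * m ^ 2
        ≤ (2 * (7 / 4 * m ^ 3) * (m / 3) + (m / 3) ^ 2) * m ^ 2 := by gcongr
      _ ≤ 6 / 5 * m ^ 6 := by nlinarith [pow_pos hm0 4]
  · rw [div_le_iff₀ (by positivity)]
    linarith

/-- The exponent of `-h'` differs from the Gaussian exponent `-a²d²/m⁶` by at most `2`. -/
lemma exponent_bound {m a d : ℝ} (hm : 2 ≤ m) (hm6 : 190 ≤ m ^ 6) (ha : 0 < a)
    (ha' : a ≤ 7 / 4 * m ^ 3) (hd : |d| ≤ m / 3) :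
    |m ^ 6 / 2 * (Real.log (1 - (2 * a * d + d ^ 2) / m ^ 6) + (2 * a * d + d ^ 2) / m ^ 6)
      + a ^ 2 * d ^ 2 / m ^ 6| ≤ 2 := by
  have hm0 : 0 < m := by linarith
  obtain ⟨hx, hx'⟩ := relative_deviation_bound hm hm6 ha ha' hd
  have hsplit : a ^ 2 * d ^ 2 / m ^ 6
      = m ^ 6 / 2 * (((2 * a * d + d ^ 2) / m ^ 6) ^ 2 / 2) - (a * d ^ 3 + d ^ 4 / 4) / m ^ 6 := by
    field_simp
    ring
  rw [hsplit]
  set x := (2 * a * d + d ^ 2) / m ^ 6 with hxdef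
  have hx1 : |x| ≤ 6 / 25 := hx.trans hx'
  have hlog := Real.abs_log_sub_add_sum_range_le (x := x) (by linarith) 2
  simp only [Finset.sum_range_succ, Finset.sum_range_zero] at hlog
  norm_num at hlog
  have hcube : |x| ^ 3 / (1 - |x|) ≤ (6 / 5 / m ^ 2) ^ 3 / (19 / 25) := by
    gcongr
    linarith
  have hmain : |m ^ 6 / 2 * (x + x ^ 2 / 2 + Real.log (1 - x))| ≤ 6 / 5 := by
    rw [abs_mul, abs_of_pos (by positivity : 0 < m ^ 6 / 2)]
    calc m ^ 6 / 2 * |x + x ^ 2 / 2 + Real.log (1 - x)|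
        ≤ m ^ 6 / 2 * ((6 / 5 / m ^ 2) ^ 3 / (19 / 25)) := by
          gcongr
          exact hlog.trans hcube
      _ = (6 / 5) ^ 3 / (19 / 25) / 2 := by field_simp
      _ ≤ 6 / 5 := by norm_num
  have hsmall : |(a * d ^ 3 + d ^ 4 / 4) / m ^ 6| ≤ 4 / 5 := by
    have h1 : |a * d ^ 3 + d ^ 4 / 4| ≤ 7 / 4 * m ^ 3 * (m / 3) ^ 3 + (m / 3) ^ 4 / 4 := by
      calc |a * d ^ 3 + d ^ 4 / 4| ≤ |a * d ^ 3| + |d ^ 4 / 4| := abs_add_le _ _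
        _ = a * |d| ^ 3 + |d| ^ 4 / 4 := by
          rw [abs_mul, abs_div, abs_pow, abs_pow, abs_of_pos ha]
          norm_num
        _ ≤ _ := by gcongr
    rw [abs_div, abs_of_pos (by positivity : 0 < m ^ 6), div_le_iff₀ (by positivity)]
    have h2 : m ^ 4 ≤ m ^ 6 := pow_le_pow_right₀ (by linarith) (by norm_num)
    nlinarith
  have := abs_sub (m ^ 6 / 2 * (x + x ^ 2 / 2 + Real.log (1 - x)))
    ((a * d ^ 3 + d ^ 4 / 4) / m ^ 6)
  calc _ = |m ^ 6 / 2 * (x + x ^ 2 / 2 + Real.log (1 - x))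
        - (a * d ^ 3 + d ^ 4 / 4) / m ^ 6| := by
        congr 1
        ring
    _ ≤ 2 := by linarith

/-- `-h'` in terms of the relative deviation `x` of `(R² - s²)/(2σ²)` from its value
`(D-3)/2` at `s⋆`. -/
lemma negDH_eq {D : ℕ} {σ R s x : ℝ} (hD : 0 < (D : ℝ) - 3) (hx : x < 1)
    (h : (R ^ 2 - s ^ 2) / (2 * σ ^ 2) = ((D : ℝ) - 3) / 2 * (1 - x)) :
    negDH D σ R s
      = CofD D * (s / σ ^ 2) * Real.exp (((D : ℝ) - 3) / 2 * (Real.log (1 - x) + x)) := by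
  have h1 : 0 < 1 - x := by linarith
  unfold negDH CofD
  rw [h, Real.mul_rpow (by positivity) h1.le, Real.rpow_def_of_pos h1,
    show -(((D : ℝ) - 3) / 2 * (1 - x)) = -(((D : ℝ) - 3) / 2) + ((D : ℝ) - 3) / 2 * x by ring,
    mul_add, Real.exp_add, Real.exp_add, mul_comm (Real.log (1 - x))]
  ring

set_option maxHeartbeats 800000 in
/-- **Subgaussian bounds for `-h'` near the phase transition.**  With
`s⋆ = √(R² - σ²(D-3))`, `ν² = σ⁴(D-3)/(2s⋆²)`, if `D > 192` and
`σ²√D ≤ s⋆² ≤ 3σ²D`, then for `|s - s⋆| ≤ (1/3)σ(D-3)^(1/6)`,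
`(1/(8e)) C(D) (s⋆/σ²) exp(-(s-s⋆)²/(2ν²)) ≤ -h'(s)
  ≤ 6e C(D) (s⋆/σ²) exp(-(s-s⋆)²/(2ν²))`. -/
theorem subgaussian_bounds_neg_h_deriv (D : ℕ) (hD : 192 < D) (σ R : ℝ)
    (hσ : 0 < σ) (hR : 0 < R) (hRD : σ ^ 2 * ((D : ℝ) - 3) < R ^ 2)
    (sstar ν : ℝ)
    (hsstar : sstar = Real.sqrt (R ^ 2 - σ ^ 2 * ((D : ℝ) - 3)))
    (hν : ν = Real.sqrt (σ ^ 4 * ((D : ℝ) - 3) / (2 * sstar ^ 2)))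
    (hlow : σ ^ 2 * Real.sqrt D ≤ sstar ^ 2)
    (hhigh : sstar ^ 2 ≤ 3 * σ ^ 2 * D)
    (s : ℝ) (hs : |s - sstar| ≤ (1 / 3) * σ * ((D : ℝ) - 3) ^ ((1 : ℝ) / 6)) :
    (1 / (8 * Real.exp 1)) * CofD D * (sstar / σ ^ 2) *
        Real.exp (-(s - sstar) ^ 2 / (2 * ν ^ 2)) ≤ negDH D σ R s ∧
    negDH D σ R s ≤ 6 * Real.exp 1 * CofD D * (sstar / σ ^ 2) *
        Real.exp (-(s - sstar) ^ 2 / (2 * ν ^ 2)) := by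
  have hDr : (193 : ℝ) ≤ D := by exact_mod_cast hD
  have hn : 190 ≤ (D : ℝ) - 3 := by linarith
  set n : ℝ := (D : ℝ) - 3 with hndef
  obtain ⟨m, hm⟩ : ∃ m : ℝ, m = n ^ ((1 : ℝ) / 6) := ⟨_, rfl⟩
  have hm0 : 0 ≤ m := hm ▸ Real.rpow_nonneg (by linarith) _
  have hmn : m ^ 6 = n := by
    rw [hm, ← Real.rpow_natCast, ← Real.rpow_mul (by linarith)]
    norm_num
  have hm6 : 190 ≤ m ^ 6 := hmn ▸ hn
  have hm2 : 2 ≤ m := by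
    by_contra! h
    have : m ^ 6 < 2 ^ 6 := by gcongr
    linarith
  have hss : sstar ^ 2 = R ^ 2 - σ ^ 2 * n := by
    rw [hsstar, Real.sq_sqrt]
    linarith
  have hs0 : 0 < sstar := by
    rw [hsstar]
    exact Real.sqrt_pos.mpr (by linarith)
  obtain ⟨a, ha⟩ : ∃ a : ℝ, sstar = σ * a := ⟨sstar / σ, by field_simp⟩
  obtain ⟨d, hd⟩ : ∃ d : ℝ, s = σ * (a + d) := ⟨s / σ - a, by field_simp; ring⟩
  have ha0 : 0 < a := by
    rw [ha] at hs0
    exact (mul_pos_iff_of_pos_left hσ).mp hs0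
  have hσ2 : 0 < σ ^ 2 := by positivity
  have hd' : |d| ≤ m / 3 := by
    rw [← hm, hd, ha, show σ * (a + d) - σ * a = σ * d by ring, abs_mul, abs_of_pos hσ] at hs
    refine le_of_mul_le_mul_left ?_ hσ
    linarith
  have halow : m ^ 3 ≤ a ^ 2 := by
    have h1 : Real.sqrt D ≤ a ^ 2 := by
      refine le_of_mul_le_mul_left ?_ hσ2
      rw [ha] at hlow
      linarith
    refine le_trans (Real.le_sqrt_of_sq_le ?_) h1
    rw [← pow_mul, hmn]
    linarith
  have hahigh : a ≤ 7 / 4 * m ^ 3 := by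
    have h1 : a ^ 2 ≤ 3 * D := by
      refine le_of_mul_le_mul_left ?_ hσ2
      rw [ha] at hhigh
      linarith
    refine abs_le_of_sq_le_sq' ?_ (by positivity) |>.2
    have h2 : (7 / 4 * m ^ 3) ^ 2 = 49 / 16 * n := by
      rw [← hmn]
      ring
    rw [h2]
    linarith
  have hda : |d| ≤ a / 3 := by
    have h1 : m ^ 2 ≤ m ^ 3 := pow_le_pow_right₀ (by linarith) (by norm_num)
    have h2 : m ≤ a := abs_le_of_sq_le_sq' (h1.trans halow) ha0.le |>.2
    linarith
  have hE := exponent_bound hm2 hm6 ha0 hahigh hd'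
  obtain ⟨hx, hx'⟩ := relative_deviation_bound hm2 hm6 ha0 hahigh hd'
  rw [hmn] at hE hx
  set x := (2 * a * d + d ^ 2) / n with hxdef
  have hn0 : 0 < n := by linarith
  have hbase : (R ^ 2 - s ^ 2) / (2 * σ ^ 2) = n / 2 * (1 - x) := by
    have hR2 : R ^ 2 = (σ * a) ^ 2 + σ ^ 2 * n := by
      rw [← ha]
      linarith
    rw [hR2, hd, hxdef]
    field_simp
    ring
  have hx1 : x < 1 := by linarith [le_abs_self x]
  have hgauss : -(s - sstar) ^ 2 / (2 * ν ^ 2) = -(a ^ 2 * d ^ 2 / n) := by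
    rw [hν, Real.sq_sqrt (by positivity), hd, ha]
    field_simp
    ring
  rw [negDH_eq hn0 hx1 hbase, hgauss]
  have hC : 0 < CofD D := by
    unfold CofD
    have : 0 < Real.Gamma (((D : ℝ) - 1) / 2) := Real.Gamma_pos_of_pos (by linarith)
    rw [← hndef]
    positivity
  obtain ⟨hE1, hE2⟩ := abs_le.mp hE
  obtain ⟨hd1, hd2⟩ := abs_le.mp hda
  have hslow : 2 / 3 * sstar ≤ s := by
    rw [hd, ha, mul_left_comm]
    gcongr
    linarith
  have hshigh : s ≤ 4 / 3 * sstar := by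
    rw [hd, ha, mul_left_comm]
    gcongr
    linarith
  have he : Real.exp 1 < 3 := Real.exp_one_lt_three
  have he0 : 0 < Real.exp 1 := Real.exp_pos 1
  have hsplit : n / 2 * (Real.log (1 - x) + x)
      = (n / 2 * (Real.log (1 - x) + x) + a ^ 2 * d ^ 2 / n) + -(a ^ 2 * d ^ 2 / n) := by ring
  rw [hsplit, Real.exp_add]
  set E := n / 2 * (Real.log (1 - x) + x) + a ^ 2 * d ^ 2 / n
  set G := Real.exp (-(a ^ 2 * d ^ 2 / n))
  have hG : 0 < G := Real.exp_pos _
  have hexp_two : Real.exp 2 = Real.exp 1 * Real.exp 1 := by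
    rw [← Real.exp_add]
    norm_num
  have hElow : 1 / (8 * Real.exp 1) ≤ 2 / 3 * Real.exp E := by
    have h1 : Real.exp (-2) ≤ Real.exp E := Real.exp_le_exp.mpr hE1
    refine le_trans ?_ (mul_le_mul_of_nonneg_left h1 (by norm_num))
    rw [Real.exp_neg, hexp_two]
    field_simp
    linarith
  have hEhigh : 4 / 3 * Real.exp E ≤ 6 * Real.exp 1 := by
    have h1 : Real.exp E ≤ Real.exp 2 := Real.exp_le_exp.mpr hE2
    have h2 : Real.exp 1 * Real.exp 1 ≤ Real.exp 1 * 3 := by gcongr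
    rw [hexp_two] at h1
    linarith
  constructor
  · calc 1 / (8 * Real.exp 1) * CofD D * (sstar / σ ^ 2) * G
        ≤ (2 / 3 * Real.exp E) * CofD D * (sstar / σ ^ 2) * G := by gcongr
      _ = CofD D * ((2 / 3 * sstar) / σ ^ 2) * (Real.exp E * G) := by ring
      _ ≤ CofD D * (s / σ ^ 2) * (Real.exp E * G) := by gcongr
  · calc CofD D * (s / σ ^ 2) * (Real.exp E * G)
        ≤ CofD D * ((4 / 3 * sstar) / σ ^ 2) * (Real.exp E * G) := by gcongr
      _ = (4 / 3 * Real.exp E) * CofD D * (sstar / σ ^ 2) * G := by ring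
      _ ≤ 6 * Real.exp 1 * CofD D * (sstar / σ ^ 2) * G := by gcongr
end

section
/- Let D be an integer with D > 48³ + 3 and σ, R > 0 with R² > σ²(D−3); set s⋆ = √(R² − σ²(D−3)) and suppose 96 log(6) · σ² D^{2/3} ≤ s⋆² ≤ 3σ²D. Let Δₛ = (1/12) σ (D−3)^{1/6} and let g(s) = −h'(s) = (1/Γ((D−1)/2)) · (s/σ²) · ((R²−s²)/(2σ²))^{(D−3)/2} · e^{−(R²−s²)/(2σ²)} for 0 < s < R. Then g is nondecreasing on (0, s⋆ − Δₛ] and nonincreasing on [s⋆ + Δₛ, R). -/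
/-- The derivative of `negDH`, as the function times its logarithmic derivative. -/
lemma hasDerivAt_negDH (D : ℕ) {σ R s : ℝ} (hσ : 0 < σ) (hs : 0 < s) (hsR : s ^ 2 < R ^ 2) :
    HasDerivAt (negDH D σ R)
      (negDH D σ R s * ((σ ^ 2 * (R ^ 2 - s ^ 2)
        + s ^ 2 * ((R ^ 2 - σ ^ 2 * ((D : ℝ) - 3)) - s ^ 2)) / (s * (R ^ 2 - s ^ 2) * σ ^ 2))) s := by
  have hpos : 0 < R ^ 2 - s ^ 2 := by linarith
  have hx : 0 < (R ^ 2 - s ^ 2) / (2 * σ ^ 2) := by positivity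
  have h1 : HasDerivAt (fun s : ℝ => (R ^ 2 - s ^ 2) / (2 * σ ^ 2)) (-(2 * s) / (2 * σ ^ 2)) s := by
    have h := ((hasDerivAt_pow 2 s).const_sub (R ^ 2)).div_const (2 * σ ^ 2)
    exact h.congr_deriv (by norm_num)
  have h2 := h1.rpow_const (p := ((D : ℝ) - 3) / 2) (Or.inl hx.ne')
  have h3 := h1.neg.exp
  have h4 := ((hasDerivAt_id s).div_const (σ ^ 2)).const_mul (1 / Real.Gamma (((D : ℝ) - 1) / 2))
  have h5 := (h4.mul h2).mul h3
  refine (h5.congr_deriv ?_ : HasDerivAt (negDH D σ R) _ s)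
  rw [Real.rpow_sub_one hx.ne']
  simp only [negDH, id, Pi.mul_apply, Pi.neg_apply]
  generalize ((R ^ 2 - s ^ 2) / (2 * σ ^ 2)) ^ (((D : ℝ) - 3) / 2) = X
  generalize Real.exp (-((R ^ 2 - s ^ 2) / (2 * σ ^ 2))) = E
  generalize 1 / Real.Gamma (((D : ℝ) - 1) / 2) = G
  have := hpos.ne'
  field_simp
  ring

lemma negDH_nonneg (D : ℕ) (hD : 3 ≤ D) {σ R s : ℝ} (hs : 0 < s) (hsR : s ^ 2 < R ^ 2) :
    0 ≤ negDH D σ R s := by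
  have hpos : 0 < R ^ 2 - s ^ 2 := by linarith
  have hD' : (3 : ℝ) ≤ D := by exact_mod_cast hD
  have hG : 0 < Real.Gamma (((D : ℝ) - 1) / 2) := Real.Gamma_pos_of_pos (by linarith)
  unfold negDH
  positivity

/-- The sign of the logarithmic derivative to the right of `s⋆ + Δₛ`, with `t = s⋆`, `n = D - 3`
and `a = n^(1/6)`. -/
lemma log_deriv_sign {σ t s a : ℝ} (hσ : 0 < σ) (ha : 1 ≤ a) (ht : 9 * σ * a ^ 2 ≤ t)
    (hs : t + 1 / 12 * σ * a ≤ s) :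
    σ ^ 2 * (t ^ 2 + σ ^ 2 * a ^ 6 - s ^ 2) + s ^ 2 * (t ^ 2 - s ^ 2) ≤ 0 := by
  have ha0 : 0 < a := by linarith
  have ht0 : 0 < t := lt_of_lt_of_le (by positivity) ht
  have hΔ : 0 < 1 / 12 * σ * a := by positivity
  have ha3 : 1 ≤ a ^ 3 := one_le_pow₀ ha
  have hgap : 3 / 2 * (σ ^ 2 * a ^ 3) ≤ s ^ 2 - t ^ 2 := by
    have h1 : (t + 1 / 12 * σ * a) ^ 2 ≤ s ^ 2 := pow_le_pow_left₀ (by linarith) hs 2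
    have h2 := mul_le_mul_of_nonneg_right ht hΔ.le
    nlinarith [sq_nonneg (1 / 12 * σ * a)]
  have hst : t ^ 2 ≤ s ^ 2 := by nlinarith [show 0 < σ ^ 2 * a ^ 3 by positivity]
  have hS : 81 * (σ ^ 2 * a ^ 4) ≤ t ^ 2 := by
    have := pow_le_pow_left₀ (by positivity) ht 2
    linarith [show (9 * σ * a ^ 2) ^ 2 = 81 * (σ ^ 2 * a ^ 4) by ring]
  have hmain : t ^ 2 * (3 / 2 * (σ ^ 2 * a ^ 3)) ≤ s ^ 2 * (s ^ 2 - t ^ 2) :=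
    mul_le_mul hst hgap (by positivity) (by positivity)
  have hA : σ ^ 2 * t ^ 2 * 1 ≤ σ ^ 2 * t ^ 2 * a ^ 3 :=
    mul_le_mul_of_nonneg_left ha3 (by positivity)
  have hB : 81 * (σ ^ 2 * a ^ 4) * (σ ^ 2 * a ^ 3) ≤ t ^ 2 * (σ ^ 2 * a ^ 3) :=
    mul_le_mul_of_nonneg_right hS (by positivity)
  have hC : σ ^ 4 * a ^ 6 * 1 ≤ σ ^ 4 * a ^ 6 * a :=
    mul_le_mul_of_nonneg_left ha (by positivity)
  have hE : 0 ≤ σ ^ 2 * s ^ 2 := by positivity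
  have hF : 0 ≤ σ ^ 4 * a ^ 6 := by positivity
  linarith [show 81 * (σ ^ 2 * a ^ 4) * (σ ^ 2 * a ^ 3) = 81 * (σ ^ 4 * a ^ 6 * a) by ring]

/-- **Monotonicity of `-h'` outside the region of phase transition.**  With
`s⋆ = √(R² - σ²(D-3))` and `Δₛ = (1/12)σ(D-3)^(1/6)`, if `D > 48³ + 3` and
`96 log 6 · σ² D^(2/3) ≤ s⋆² ≤ 3σ²D`, then `-h'` is nondecreasing on
`(0, s⋆ - Δₛ]` and nonincreasing on `[s⋆ + Δₛ, R)`. -/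
theorem neg_h_deriv_monotone (D : ℕ) (hD : 48 ^ 3 + 3 < D) (σ R : ℝ)
    (hσ : 0 < σ) (hR : 0 < R) (hRD : σ ^ 2 * ((D : ℝ) - 3) < R ^ 2)
    (sstar : ℝ) (hsstar : sstar = Real.sqrt (R ^ 2 - σ ^ 2 * ((D : ℝ) - 3)))
    (hlow : 96 * Real.log 6 * σ ^ 2 * (D : ℝ) ^ ((2 : ℝ) / 3) ≤ sstar ^ 2)
    (hhigh : sstar ^ 2 ≤ 3 * σ ^ 2 * D) :
    MonotoneOn (negDH D σ R)
        (Set.Ioc 0 (sstar - (1 / 12) * σ * ((D : ℝ) - 3) ^ ((1 : ℝ) / 6))) ∧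
    AntitoneOn (negDH D σ R)
        (Set.Ico (sstar + (1 / 12) * σ * ((D : ℝ) - 3) ^ ((1 : ℝ) / 6)) R) := by
  have hD3 : 3 ≤ D := by omega
  have hDr : (4 : ℝ) ≤ D := by exact_mod_cast (by omega : 4 ≤ D)
  have hn : (1 : ℝ) ≤ (D : ℝ) - 3 := by linarith
  have hsq : sstar ^ 2 = R ^ 2 - σ ^ 2 * ((D : ℝ) - 3) := by
    rw [hsstar, Real.sq_sqrt (by linarith)]
  have ht0 : 0 < sstar := by
    rw [hsstar]; exact Real.sqrt_pos.2 (by linarith)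
  have hσ2 : 0 < σ ^ 2 := by positivity
  have ha : 1 ≤ ((D : ℝ) - 3) ^ ((1 : ℝ) / 6) := Real.one_le_rpow hn (by norm_num)
  have ha6 : (((D : ℝ) - 3) ^ ((1 : ℝ) / 6)) ^ 6 = (D : ℝ) - 3 := by
    rw [← Real.rpow_natCast, ← Real.rpow_mul (by linarith)]; norm_num
  have ha4 : (((D : ℝ) - 3) ^ ((1 : ℝ) / 6)) ^ 4 ≤ (D : ℝ) ^ ((2 : ℝ) / 3) := by
    rw [← Real.rpow_natCast, ← Real.rpow_mul (by linarith)]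
    norm_num
    exact Real.rpow_le_rpow (by linarith) (by linarith) (by norm_num)
  generalize ((D : ℝ) - 3) ^ ((1 : ℝ) / 6) = a at ha ha6 ha4 ⊢
  have hΔ : 0 < 1 / 12 * σ * a := by positivity
  have hlog : 1 ≤ Real.log 6 := by
    rw [Real.le_log_iff_exp_le (by norm_num)]
    linarith [Real.exp_one_lt_d9]
  -- `96 log 6 ≥ 81` turns the lower bound on `s⋆²` into `s⋆ ≥ 9σa²`.
  have ht : 9 * σ * a ^ 2 ≤ sstar := by
    refine abs_le_of_sq_le_sq' ?_ ht0.le |>.2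
    calc (9 * σ * a ^ 2) ^ 2 = 81 * σ ^ 2 * a ^ 4 := by ring
      _ ≤ 96 * Real.log 6 * σ ^ 2 * (D : ℝ) ^ ((2 : ℝ) / 3) := by gcongr; linarith
      _ ≤ sstar ^ 2 := hlow
  have hR2 : R ^ 2 = sstar ^ 2 + σ ^ 2 * a ^ 6 := by rw [ha6]; linarith
  have htR : sstar ^ 2 < R ^ 2 := by
    have : 0 < σ ^ 2 * a ^ 6 := by positivity
    linarith
  constructor
  · have hdom : ∀ s ∈ Set.Ioc 0 (sstar - 1 / 12 * σ * a), 0 < s ∧ s ^ 2 ≤ sstar ^ 2 :=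
      fun s hs => ⟨hs.1, pow_le_pow_left₀ hs.1.le (by linarith [hs.2]) 2⟩
    refine monotoneOn_of_deriv_nonneg (convex_Ioc _ _) ?_ ?_ ?_
    · intro s hs
      obtain ⟨h0, h1⟩ := hdom s hs
      exact (hasDerivAt_negDH D hσ h0 (by linarith)).continuousAt.continuousWithinAt
    · intro s hs
      obtain ⟨h0, h1⟩ := hdom s (interior_subset hs)
      exact (hasDerivAt_negDH D hσ h0 (by linarith)).differentiableAt.differentiableWithinAt
    · intro s hs
      obtain ⟨h0, h1⟩ := hdom s (interior_subset hs)
      have hsR : s ^ 2 < R ^ 2 := by linarith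
      have hp : 0 < R ^ 2 - s ^ 2 := by linarith
      rw [(hasDerivAt_negDH D hσ h0 hsR).deriv, ← hsq]
      have hq : 0 ≤ sstar ^ 2 - s ^ 2 := by linarith
      exact mul_nonneg (negDH_nonneg D hD3 h0 hsR) (by positivity)
  · have hdom : ∀ s ∈ Set.Ico (sstar + 1 / 12 * σ * a) R, 0 < s ∧ s ^ 2 < R ^ 2 := by
      intro s hs
      have h0 : 0 < s := by linarith [hs.1]
      exact ⟨h0, pow_lt_pow_left₀ hs.2 h0.le (by norm_num)⟩
    refine antitoneOn_of_deriv_nonpos (convex_Ico _ _) ?_ ?_ ?_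
    · intro s hs
      obtain ⟨h0, h1⟩ := hdom s hs
      exact (hasDerivAt_negDH D hσ h0 h1).continuousAt.continuousWithinAt
    · intro s hs
      obtain ⟨h0, h1⟩ := hdom s (interior_subset hs)
      exact (hasDerivAt_negDH D hσ h0 h1).differentiableAt.differentiableWithinAt
    · intro s hs
      obtain ⟨h0, h1⟩ := hdom s (interior_subset hs)
      have hp : 0 < R ^ 2 - s ^ 2 := by linarith
      have hsign := log_deriv_sign hσ ha ht (interior_subset hs).1
      rw [(hasDerivAt_negDH D hσ h0 h1).deriv, ← hsq]
      rw [← hR2] at hsign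
      exact mul_nonpos_of_nonneg_of_nonpos (negDH_nonneg D hD3 h0 h1)
        (div_nonpos_of_nonpos_of_nonneg hsign (by positivity))
end

section
/- Let D be an integer with D > (48 log 6)³ + 3 and σ, R > 0 with R² > σ²(D−3). Set s⋆ = √(R² − σ²(D−3)), ν² = σ⁴(D−3)/(2s⋆²), ν̄ = √(ν² + σ²), and C(D) = ((D−3)/2)^{(D−3)/2} e^{−(D−3)/2} / Γ((D−1)/2). Suppose 24 log(6) · σ² D^{2/3} ≤ s⋆² ≤ 3σ²D. Then for every s with |s − s⋆| ≤ (1/6) σ (D−3)^{1/6}, the convolution [φ ∗ (−h')](s) satisfies (1/(16e)) · C(D) · (ν/ν̄) · (s⋆/σ²) · exp(−(s−s⋆)²/(2ν̄²)) ≤ [φ ∗ (−h')](s) ≤ 9e · C(D) · (ν/ν̄) · (s⋆/σ²) · exp(−(s−s⋆)²/(2ν̄²)). -/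
/-!
Up to rescaling, `σ = 1`. Put `m = D - 3`, `p = m^(1/6)`, `a = s⋆`. With `y = (a² - u²)/m`,
`-h'(u) = C(D) u exp ((m/2)(log (1+y) - y))` on `(0, R)` (`negDH_one_eq`). At `u = a + w`, the
quadratic term `-(m/4) y²` of the exponent is `-a²w²/m = -w²/(2ν²)` up to an error `O(a|w|³/m)`, and
the cubic remainder is `O(a³|w|³/m²)`. Both errors are bounded on the window `|w| ≤ p/2`, since
`a = O(p³)`. There `-h'` is `C(D) a exp (-w²/(2ν²))` up to constant factors
(`ext_le`, `le_ext`). To the right of the window the Gaussian upper bound persists; to the left,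
`|-h'| ≤ 9 C(D) a` (`abs_ext_le`).

The product of `φ` with `exp (-w²/(2ν²))` is a single Gaussian of mass
`(ν/ν̄) exp (-(s-a)²/(2ν̄²))` (`bump_mul`, `integral_bump`). As `|s - a| ≤ p/6`, its centre is at
distance at least `p/3` from the complement of the window, so the truncation costs only a small
fraction of that mass. On the left tail and on the negative half-line, the decay of `φ` alone beats
`(ν/ν̄) exp (-(s-a)²/(2ν̄²)) ≥ exp (-p²/72) / 3` (`conv_one_bounds`).
-/

open MeasureTheory

/-- `-h'` extended to all of `ℝ`: it is set to `0` outside `(0, R)`, except that for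
`s < 0` one uses `-h'(s) = -h'(-s) · sign s` (the derivative of the even extension
of `h`). -/
noncomputable def negDHext (D : ℕ) (σ R : ℝ) (s : ℝ) : ℝ :=
  if s < 0 then -(if 0 < -s ∧ -s < R then negDH D σ R (-s) else 0)
  else (if 0 < s ∧ s < R then negDH D σ R s else 0)

/-- The centered Gaussian density with standard deviation `σ`. -/
noncomputable def gaussPdf (σ : ℝ) (v : ℝ) : ℝ :=
  (1 / (Real.sqrt (2 * Real.pi) * σ)) * Real.exp (-v ^ 2 / (2 * σ ^ 2))

/-- Convolution `[φ ∗ f](t) = ∫ φ(v) f(t - v) dv` with the Gaussian density. -/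
noncomputable def gaussConv (σ : ℝ) (f : ℝ → ℝ) (t : ℝ) : ℝ :=
  ∫ v : ℝ, gaussPdf σ v * f (t - v)

/-! ### Cubic bounds for the logarithm -/

lemma log_one_add_le_cubic {y : ℝ} (hy : -1 < y) :
    Real.log (1 + y) ≤ y - y ^ 2 / 2 + y ^ 3 / 3 := by
  have hd : ∀ x : ℝ, -1 < x →
      HasDerivAt (fun t : ℝ => t - t ^ 2 / 2 + t ^ 3 / 3 - Real.log (1 + t)) (x ^ 3 / (1 + x)) x := by
    intro x hx
    have hx' : 1 + x ≠ 0 := by linarith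
    have h := (((hasDerivAt_id x).sub (((hasDerivAt_id x).pow 2).div_const 2)).add
      (((hasDerivAt_id x).pow 3).div_const 3)).sub (((hasDerivAt_id x).const_add 1).log hx')
    refine HasDerivAt.congr_deriv h ?_
    simp only [id]
    field_simp
    push_cast
    ring
  rcases le_total 0 y with h0 | h0
  · have hm : MonotoneOn (fun t : ℝ => t - t ^ 2 / 2 + t ^ 3 / 3 - Real.log (1 + t)) (Set.Icc 0 y) := by
      apply monotoneOn_of_deriv_nonneg (convex_Icc 0 y)
      · intro x hx
        exact (hd x (by linarith [hx.1])).continuousAt.continuousWithinAt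
      · intro x hx
        rw [interior_Icc] at hx
        exact (hd x (by linarith [hx.1])).differentiableAt.differentiableWithinAt
      · intro x hx
        rw [interior_Icc] at hx
        rw [(hd x (by linarith [hx.1])).deriv]
        have := hx.1
        positivity
    have := hm (Set.left_mem_Icc.2 h0) (Set.right_mem_Icc.2 h0) h0
    norm_num at this
    linarith
  · have hm : AntitoneOn (fun t : ℝ => t - t ^ 2 / 2 + t ^ 3 / 3 - Real.log (1 + t)) (Set.Icc y 0) := by
      apply antitoneOn_of_deriv_nonpos (convex_Icc y 0)
      · intro x hx
        exact (hd x (by linarith [hx.1])).continuousAt.continuousWithinAt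
      · intro x hx
        rw [interior_Icc] at hx
        exact (hd x (by linarith [hx.1])).differentiableAt.differentiableWithinAt
      · intro x hx
        rw [interior_Icc] at hx
        rw [(hd x (by linarith [hx.1])).deriv]
        apply div_nonpos_of_nonpos_of_nonneg
        · have := hx.2
          exact (Odd.pow_nonpos_iff (by decide)).2 hx.2.le
        · linarith [hx.1]
    have := hm (Set.left_mem_Icc.2 h0) (Set.right_mem_Icc.2 h0) h0
    norm_num at this
    linarith

/-- The factor `1/2` in the cubic term, rather than `1/3`, absorbs the higher order terms. -/
lemma cubic_le_log_one_add {y : ℝ} (hy : |y| ≤ 1 / 3) :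
    y - y ^ 2 / 2 - |y| ^ 3 / 2 ≤ Real.log (1 + y) := by
  obtain ⟨hy1, hy2⟩ := abs_le.1 hy
  have hd : ∀ (c x : ℝ), -1 < x →
      HasDerivAt (fun t : ℝ => t - t ^ 2 / 2 + c * t ^ 3 / 2 - Real.log (1 + t))
        (x ^ 2 * (3 * c / 2 - 1 / (1 + x))) x := by
    intro c x hx
    have hx' : 1 + x ≠ 0 := by linarith
    have h := (((hasDerivAt_id x).sub (((hasDerivAt_id x).pow 2).div_const 2)).add
      ((((hasDerivAt_id x).pow 3).const_mul c).div_const 2)).sub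
        (((hasDerivAt_id x).const_add 1).log hx')
    refine HasDerivAt.congr_deriv h ?_
    simp only [id]
    field_simp
    push_cast
    ring
  rcases le_total 0 y with h0 | h0
  · have hm : AntitoneOn (fun t : ℝ => t - t ^ 2 / 2 + (-1) * t ^ 3 / 2 - Real.log (1 + t))
        (Set.Icc 0 y) := by
      apply antitoneOn_of_deriv_nonpos (convex_Icc 0 y)
      · intro x hx
        exact (hd _ x (by linarith [hx.1])).continuousAt.continuousWithinAt
      · intro x hx
        rw [interior_Icc] at hx
        exact (hd _ x (by linarith [hx.1])).differentiableAt.differentiableWithinAt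
      · intro x hx
        rw [interior_Icc] at hx
        rw [(hd _ x (by linarith [hx.1])).deriv]
        have h1 : 0 < 1 / (1 + x) := by have := hx.1; positivity
        apply mul_nonpos_of_nonneg_of_nonpos (sq_nonneg x)
        linarith
    have := hm (Set.left_mem_Icc.2 h0) (Set.right_mem_Icc.2 h0) h0
    norm_num at this
    rw [abs_of_nonneg h0]
    linarith
  · have hm : MonotoneOn (fun t : ℝ => t - t ^ 2 / 2 + 1 * t ^ 3 / 2 - Real.log (1 + t))
        (Set.Icc y 0) := by
      apply monotoneOn_of_deriv_nonneg (convex_Icc y 0)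
      · intro x hx
        exact (hd _ x (by linarith [hx.1])).continuousAt.continuousWithinAt
      · intro x hx
        rw [interior_Icc] at hx
        exact (hd _ x (by linarith [hx.1])).differentiableAt.differentiableWithinAt
      · intro x hx
        rw [interior_Icc] at hx
        rw [(hd _ x (by linarith [hx.1])).deriv]
        have h1 : 1 / (1 + x) ≤ 3 / 2 := by
          rw [div_le_iff₀ (by linarith [hx.1])]
          linarith [hx.1]
        apply mul_nonneg (sq_nonneg x)
        linarith
    have := hm (Set.left_mem_Icc.2 h0) (Set.right_mem_Icc.2 h0) h0
    norm_num at this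
    rw [abs_of_nonpos h0]
    ring_nf at this ⊢
    linarith

/-! ### Estimates on the exponent -/

/-- The parameter regime in normalised units: `p = (D-3)^(1/6)` and `a = s⋆/σ`. The bounds are the
consequences of the hypotheses on `D` and `s⋆` that the argument uses, with rounded constants
(`log 6 ≥ 5/3` gives `p² ≥ 80` and `a² ≥ 40 p⁴`). -/
structure NormalizedRegime (p a : ℝ) : Prop where
  hp : 80 ≤ p ^ 2
  p_pos : 0 < p
  a_pos : 0 < a
  lo : 6 * p ^ 2 ≤ a
  hi : a ≤ (7 / 4) * p ^ 3

/-- The exponent of `-h'`: with `m = D-3` and `y = (s⋆² - u²)/(σ² m)`, one has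
`-h'(u) = C(D) (u/σ²) exp (lexp m y)`, see `negDH_one_eq`. -/
noncomputable def lexp (m y : ℝ) : ℝ := m / 2 * (Real.log (1 + y) - y)

lemma lexp_nonpos {m y : ℝ} (hm : 0 < m) (hy : -1 < y) : lexp m y ≤ 0 := by
  unfold lexp
  have := Real.log_le_sub_one_of_pos (show 0 < 1 + y by linarith)
  apply mul_nonpos_of_nonneg_of_nonpos <;> linarith

/-- To the right of `s⋆` (at `u = a + w`, `w ≥ 0`) the Gaussian exponent `-a²w²/m` is an upper bound,
with a cubic gain that pays for the prefactor `u = a + w` when `w` is large. -/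
lemma lexp_right {a m w : ℝ} (ha : 0 < a) (hm : 0 < m) (hw : 0 ≤ w)
    (hy : -1 < -(2 * a * w + w ^ 2) / m) :
    lexp m (-(2 * a * w + w ^ 2) / m) ≤ -(a ^ 2 / m * w ^ 2) - a * w ^ 3 / m := by
  have h := log_one_add_le_cubic hy
  have hy0 : 0 ≤ (2 * a * w + w ^ 2) / m := by positivity
  have h3 : 0 ≤ ((2 * a * w + w ^ 2) / m) ^ 3 := by positivity
  have e : -(2 * a * w + w ^ 2) / m = -((2 * a * w + w ^ 2) / m) := by ring
  rw [e] at h ⊢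
  set y := (2 * a * w + w ^ 2) / m with hyd
  have hmy : m * y = 2 * a * w + w ^ 2 := by rw [hyd]; field_simp
  have h2 : lexp m (-y) ≤ -(m / 4 * y ^ 2) := by
    unfold lexp
    nlinarith [mul_le_mul_of_nonneg_left h hm.le, mul_nonneg hm.le h3]
  have h4 : m / 4 * y ^ 2 = a ^ 2 / m * w ^ 2 + a * w ^ 3 / m + w ^ 4 / (4 * m) := by
    rw [hyd]; field_simp; ring
  have : 0 ≤ w ^ 4 / (4 * m) := by positivity
  linarith

/-- The two cubic error terms are bounded on the window `r ≤ p/2`. -/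
lemma cube_err {p a r : ℝ} (h : NormalizedRegime p a) (hr : 0 ≤ r) (hr2 : r ≤ p / 2) :
    a * r ^ 3 / p ^ 6 ≤ 7 / 32 ∧ a ^ 3 * r ^ 3 / p ^ 12 ≤ 343 / 512 := by
  have hp := h.p_pos
  have ha := h.a_pos
  have hi := h.hi
  have h1 : r ^ 3 ≤ p ^ 3 / 8 := by
    calc r ^ 3 ≤ (p / 2) ^ 3 := by gcongr
      _ = _ := by ring
  constructor
  · rw [div_le_iff₀ (by positivity)]
    calc a * r ^ 3 ≤ (7 / 4 * p ^ 3) * (p ^ 3 / 8) := by gcongr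
      _ = _ := by ring
  · rw [div_le_iff₀ (by positivity)]
    calc a ^ 3 * r ^ 3 ≤ (7 / 4 * p ^ 3) ^ 3 * (p ^ 3 / 8) := by gcongr
      _ = _ := by ring

/-- Upper bound on the exponent at `u = a - r`, in the window to the left of `s⋆`. -/
lemma lexp_left {p a r : ℝ} (h : NormalizedRegime p a) (hr : 0 ≤ r) (hr2 : r ≤ p / 2) :
    lexp (p ^ 6) ((2 * a * r - r ^ 2) / p ^ 6) ≤ -(a ^ 2 / p ^ 6 * r ^ 2) + 2 := by
  obtain ⟨e1, e2⟩ := cube_err h hr hr2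
  have hp := h.p_pos
  have ha := h.a_pos
  have hra : r ≤ a := by nlinarith [h.lo, h.hp]
  have hm : 0 < p ^ 6 := by positivity
  have hy0 : 0 ≤ (2 * a * r - r ^ 2) / p ^ 6 := by
    apply div_nonneg _ hm.le
    nlinarith
  have hyb : (2 * a * r - r ^ 2) / p ^ 6 ≤ 2 * a * r / p ^ 6 := by
    gcongr; nlinarith
  have h4 : p ^ 6 / 4 * ((2 * a * r - r ^ 2) / p ^ 6) ^ 2
      = a ^ 2 / p ^ 6 * r ^ 2 - a * r ^ 3 / p ^ 6 + r ^ 4 / (4 * p ^ 6) := by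
    field_simp; ring
  have h5 : p ^ 6 / 6 * ((2 * a * r - r ^ 2) / p ^ 6) ^ 3 ≤ 4 / 3 * (a ^ 3 * r ^ 3 / p ^ 12) := by
    calc _ ≤ p ^ 6 / 6 * (2 * a * r / p ^ 6) ^ 3 := by gcongr
      _ = _ := by field_simp; ring
  set y := (2 * a * r - r ^ 2) / p ^ 6 with hyd
  have hl := log_one_add_le_cubic (show -1 < y by linarith)
  have hl2 := mul_le_mul_of_nonneg_left hl (show 0 ≤ p ^ 6 / 2 by positivity)
  have : 0 ≤ r ^ 4 / (4 * p ^ 6) := by positivity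
  unfold lexp
  linarith

/-- Lower bound on the exponent at `u = a + w`, in the window `|w| ≤ p/2`. The first conjunct also
shows that the window lies inside `(-R, R)`. -/
lemma le_lexp {p a w : ℝ} (h : NormalizedRegime p a) (hw : |w| ≤ p / 2) :
    |-(2 * a * w + w ^ 2) / p ^ 6| ≤ 1 / 3 ∧
    -(a ^ 2 / p ^ 6 * w ^ 2) - 2 ≤ lexp (p ^ 6) (-(2 * a * w + w ^ 2) / p ^ 6) := by
  obtain ⟨e1, e2⟩ := cube_err h (abs_nonneg w) hw
  have hp := h.p_pos
  have ha := h.a_pos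
  have hp2 := h.hp
  have hp8 : 8 ≤ p := by nlinarith
  have hwa : 100 * |w| ≤ a := by nlinarith [h.lo, h.hp]
  have hm : 0 < p ^ 6 := by positivity
  have hyb : |-(2 * a * w + w ^ 2) / p ^ 6| ≤ (201 / 100) * a * |w| / p ^ 6 := by
    rw [abs_div, abs_of_pos hm, abs_neg]
    gcongr
    calc |2 * a * w + w ^ 2| ≤ |2 * a * w| + |w ^ 2| := abs_add_le _ _
      _ = 2 * a * |w| + |w| * |w| := by
        rw [abs_mul, abs_of_pos (show 0 < 2 * a by positivity), abs_pow]; ring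
      _ ≤ _ := by nlinarith [abs_nonneg w]
  have hy3 : |-(2 * a * w + w ^ 2) / p ^ 6| ≤ 1 / 3 := by
    refine hyb.trans ?_
    rw [div_le_iff₀ hm]
    have : a * |w| ≤ 7 / 4 * p ^ 3 * (p / 2) := by
      have := h.hi
      gcongr
    have h4 : 80 * p ^ 4 ≤ p ^ 6 := by
      have : 0 ≤ p ^ 4 := by positivity
      nlinarith
    nlinarith
  refine ⟨hy3, ?_⟩
  have h4 : p ^ 6 / 4 * (-(2 * a * w + w ^ 2) / p ^ 6) ^ 2
      = a ^ 2 / p ^ 6 * w ^ 2 + a * w ^ 3 / p ^ 6 + w ^ 4 / (4 * p ^ 6) := by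
    field_simp; ring
  have h5 : p ^ 6 / 4 * |-(2 * a * w + w ^ 2) / p ^ 6| ^ 3 ≤ 21 / 10 * (a ^ 3 * |w| ^ 3 / p ^ 12) := by
    calc _ ≤ p ^ 6 / 4 * ((201 / 100) * a * |w| / p ^ 6) ^ 3 := by gcongr
      _ = (201 / 100) ^ 3 / 4 * (a ^ 3 * |w| ^ 3 / p ^ 12) := by field_simp
      _ ≤ _ := by
        apply mul_le_mul_of_nonneg_right (by norm_num)
        positivity
  have h6 : a * w ^ 3 / p ^ 6 ≤ a * |w| ^ 3 / p ^ 6 := by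
    have h8 : w ^ 3 ≤ |w| ^ 3 := by rw [← abs_pow]; exact le_abs_self _
    apply div_le_div_of_nonneg_right _ hm.le
    exact mul_le_mul_of_nonneg_left h8 ha.le
  have h7 : w ^ 4 / (4 * p ^ 6) ≤ 1 / 100 := by
    rw [div_le_iff₀ (by positivity)]
    have : w ^ 4 ≤ (p / 2) ^ 4 := by
      calc w ^ 4 = |w| ^ 4 := by rw [← abs_pow, abs_of_nonneg (by positivity)]
        _ ≤ _ := by gcongr
    have : 0 ≤ p ^ 4 := by positivity
    nlinarith
  set y := -(2 * a * w + w ^ 2) / p ^ 6 with hyd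
  have hl2 := mul_le_mul_of_nonneg_left (cubic_le_log_one_add hy3)
    (show 0 ≤ p ^ 6 / 2 by positivity)
  unfold lexp
  linarith

/-! ### Pointwise bounds on `-h'` for `σ = 1` -/

lemma CofD_pos {D : ℕ} (hD : (3 : ℝ) < D) : 0 < CofD D := by
  unfold CofD
  have h1 : 0 < Real.Gamma (((D : ℝ) - 1) / 2) := Real.Gamma_pos_of_pos (by linarith)
  have h2 : 0 < ((D : ℝ) - 3) / 2 := by linarith
  positivity

lemma negDH_one_eq {D : ℕ} {R p a u : ℝ} (hp : 0 < p) (hD : (D : ℝ) - 3 = p ^ 6)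
    (hR : R ^ 2 = a ^ 2 + p ^ 6) (hu : u ^ 2 < R ^ 2) :
    negDH D 1 R u = CofD D * (u * Real.exp (lexp (p ^ 6) ((a ^ 2 - u ^ 2) / p ^ 6))) := by
  have hm : 0 < p ^ 6 := by positivity
  set y := (a ^ 2 - u ^ 2) / p ^ 6 with hy
  have hy1 : 0 < 1 + y := by
    have : 1 + y = (R ^ 2 - u ^ 2) / p ^ 6 := by rw [hy, hR]; field_simp; ring
    rw [this]; apply div_pos _ hm; linarith
  have hx : (R ^ 2 - u ^ 2) / (2 * 1 ^ 2) = p ^ 6 / 2 * (1 + y) := by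
    rw [hy, hR]; field_simp; ring
  unfold negDH CofD lexp
  rw [hx, hD, Real.mul_rpow (by positivity) hy1.le, Real.rpow_def_of_pos hy1]
  have e1 : Real.exp (-(p ^ 6 / 2 * (1 + y)))
      = Real.exp (-(p ^ 6 / 2)) * Real.exp (-(p ^ 6 / 2 * y)) := by
    rw [← Real.exp_add]; ring_nf
  have e2 : Real.exp (p ^ 6 / 2 * (Real.log (1 + y) - y))
      = Real.exp (Real.log (1 + y) * (p ^ 6 / 2)) * Real.exp (-(p ^ 6 / 2 * y)) := by
    rw [← Real.exp_add]; ring_nf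
  rw [e1, e2]
  ring

/-- Gaussian upper bound with constant `e²`, except for the far left tail, where only `exp (lexp ..) ≤ 1`
is used. -/
lemma negDH_one_le {D : ℕ} {R p a u : ℝ} (h : NormalizedRegime p a) (hD : (D : ℝ) - 3 = p ^ 6)
    (hR : R ^ 2 = a ^ 2 + p ^ 6) (hu0 : 0 < u) (hu : u ^ 2 < R ^ 2) :
    negDH D 1 R u ≤ CofD D * (a * (Real.exp 2 * Real.exp (-(a ^ 2 / p ^ 6 * (u - a) ^ 2)) +
      if u - a < -(p / 2) then 1 else 0)) := by
  have hp := h.p_pos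
  have ha := h.a_pos
  have hm : 0 < p ^ 6 := by positivity
  have hC : 0 < CofD D := CofD_pos (by linarith)
  rw [negDH_one_eq hp hD hR hu]
  apply mul_le_mul_of_nonneg_left _ hC.le
  have hy1 : -1 < (a ^ 2 - u ^ 2) / p ^ 6 := by
    rw [lt_div_iff₀ hm]; linarith
  rcases le_or_gt a u with hau | hau
  · rw [if_neg (by linarith), add_zero]
    obtain ⟨w, rfl⟩ : ∃ w, u = a + w := ⟨u - a, by ring⟩
    have hw : 0 ≤ w := by linarith
    have e : a ^ 2 - (a + w) ^ 2 = -(2 * a * w + w ^ 2) := by ring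
    rw [e] at hy1 ⊢
    have hl := lexp_right ha hm hw hy1
    -- `1 + x ≤ 2 exp (x³)` for `x = w / a`, together with `p⁶ ≤ a⁴`
    have hb : (a + w) ≤ a * (2 * Real.exp (a * w ^ 3 / p ^ 6)) := by
      have h1 := Real.add_one_le_exp (a * w ^ 3 / p ^ 6)
      have h2 : (w / a) ^ 3 ≤ a * w ^ 3 / p ^ 6 := by
        rw [div_pow, div_le_div_iff₀ (by positivity) hm]
        have h5 : p ^ 6 ≤ a ^ 4 := by
          calc p ^ 6 ≤ (6 * p ^ 2) ^ 4 := by nlinarith [h.hp, sq_nonneg p]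
            _ ≤ a ^ 4 := by have := h.lo; gcongr
        calc w ^ 3 * p ^ 6 ≤ w ^ 3 * a ^ 4 := by gcongr
          _ = _ := by ring
      have h3 : 1 + w / a ≤ 2 * (1 + (w / a) ^ 3) := by
        have : 0 ≤ w / a := by positivity
        nlinarith [sq_nonneg (w / a - 1), mul_nonneg this (sq_nonneg (w / a - 1)), sq_nonneg (w / a)]
      calc a + w = a * (1 + w / a) := by field_simp
        _ ≤ _ := by gcongr; linarith
    have h2e : (2 : ℝ) ≤ Real.exp 2 := by linarith [Real.add_one_le_exp (2 : ℝ)]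
    calc (a + w) * Real.exp (lexp (p ^ 6) (-(2 * a * w + w ^ 2) / p ^ 6))
        ≤ a * (2 * Real.exp (a * w ^ 3 / p ^ 6)) *
          Real.exp (-(a ^ 2 / p ^ 6 * w ^ 2) - a * w ^ 3 / p ^ 6) := by gcongr
      _ = a * (2 * Real.exp (-(a ^ 2 / p ^ 6 * w ^ 2))) := by
        rw [mul_assoc, mul_assoc, ← Real.exp_add]; ring_nf
      _ ≤ _ := by
        rw [add_sub_cancel_left]; gcongr
  · apply mul_le_mul hau.le _ (Real.exp_pos _).le ha.le
    split_ifs with hc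
    · have h1 : Real.exp (lexp (p ^ 6) ((a ^ 2 - u ^ 2) / p ^ 6)) ≤ 1 :=
        Real.exp_le_one_iff.2 (lexp_nonpos hm hy1)
      have : 0 < Real.exp 2 * Real.exp (-(a ^ 2 / p ^ 6 * (u - a) ^ 2)) := by positivity
      linarith
    · obtain ⟨r, rfl⟩ : ∃ r, u = a - r := ⟨a - u, by ring⟩
      have hl := lexp_left (r := r) h (by linarith) (by linarith)
      have e : a ^ 2 - (a - r) ^ 2 = 2 * a * r - r ^ 2 := by ring
      rw [e, add_zero, ← Real.exp_add]
      apply Real.exp_le_exp.2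
      calc _ ≤ _ := hl
        _ = _ := by ring

lemma exp_two_lt : Real.exp 2 < 15 / 2 := by
  have h1 := Real.exp_one_lt_d9
  have h0 := Real.exp_pos 1
  have : Real.exp 2 = Real.exp 1 * Real.exp 1 := by rw [← Real.exp_add]; norm_num
  rw [this]; nlinarith

lemma negDH_one_le_const {D : ℕ} {R p a u : ℝ} (h : NormalizedRegime p a) (hD : (D : ℝ) - 3 = p ^ 6)
    (hR : R ^ 2 = a ^ 2 + p ^ 6) (hu0 : 0 < u) (hu : u ^ 2 < R ^ 2) :
    0 ≤ negDH D 1 R u ∧ negDH D 1 R u ≤ CofD D * (a * 9) := by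
  have hp := h.p_pos
  have ha := h.a_pos
  have hm : 0 < p ^ 6 := by positivity
  have hC : 0 < CofD D := CofD_pos (by linarith)
  constructor
  · rw [negDH_one_eq hp hD hR hu]; positivity
  · refine (negDH_one_le h hD hR hu0 hu).trans ?_
    gcongr
    have h1 : Real.exp (-(a ^ 2 / p ^ 6 * (u - a) ^ 2)) ≤ 1 :=
      Real.exp_le_one_iff.2 (by have : 0 ≤ a ^ 2 / p ^ 6 * (u - a) ^ 2 := by positivity
                                linarith)
    have h2 := exp_two_lt
    have h3 : (if u - a < -(p / 2) then (1 : ℝ) else 0) ≤ 1 := by split_ifs <;> norm_num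
    nlinarith [Real.exp_pos 2]

lemma ext_le {D : ℕ} {R p a : ℝ} (h : NormalizedRegime p a) (hD : (D : ℝ) - 3 = p ^ 6)
    (hR : R ^ 2 = a ^ 2 + p ^ 6) (u : ℝ) :
    negDHext D 1 R u ≤ CofD D * (a * (Real.exp 2 * Real.exp (-(a ^ 2 / p ^ 6 * (u - a) ^ 2)) +
      if u - a < -(p / 2) then 1 else 0)) := by
  have hp := h.p_pos
  have ha := h.a_pos
  have hm : 0 < p ^ 6 := by positivity
  have hC : 0 < CofD D := CofD_pos (by linarith)
  have hpos : 0 ≤ CofD D * (a * (Real.exp 2 * Real.exp (-(a ^ 2 / p ^ 6 * (u - a) ^ 2)) +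
      if u - a < -(p / 2) then 1 else 0)) := by
    split_ifs <;> positivity
  unfold negDHext
  by_cases h1 : u < 0
  · rw [if_pos h1]
    refine le_trans ?_ hpos
    by_cases h2 : 0 < -u ∧ -u < R
    · rw [if_pos h2]
      have := (negDH_one_le_const h hD hR h2.1 (by nlinarith)).1
      linarith
    · rw [if_neg h2]; simp
  · rw [if_neg h1]
    by_cases h2 : 0 < u ∧ u < R
    · rw [if_pos h2]
      exact negDH_one_le h hD hR h2.1 (by nlinarith)
    · rw [if_neg h2]; exact hpos

lemma abs_ext_le {D : ℕ} {R p a : ℝ} (h : NormalizedRegime p a) (hD : (D : ℝ) - 3 = p ^ 6)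
    (hR : R ^ 2 = a ^ 2 + p ^ 6) (u : ℝ) :
    |negDHext D 1 R u| ≤ CofD D * (a * 9) := by
  have hp := h.p_pos
  have ha := h.a_pos
  have hm : 0 < p ^ 6 := by positivity
  have hC : 0 < CofD D := CofD_pos (by linarith)
  have hpos : 0 ≤ CofD D * (a * 9) := by positivity
  unfold negDHext
  split_ifs with h1 h2 h3
  · obtain ⟨h3, h4⟩ := negDH_one_le_const h hD hR h2.1 (by nlinarith)
    rw [abs_neg, abs_of_nonneg h3]; exact h4
  · simpa using hpos
  · obtain ⟨h4, h5⟩ := negDH_one_le_const h hD hR h3.1 (by nlinarith)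
    rw [abs_of_nonneg h4]; exact h5
  · simpa using hpos

/-- Lower bound on `-h'`: a truncated Gaussian on the window `|u - a| ≤ p/2`, minus a crude bound for
the negative half-line, where `-h'` is negative. -/
lemma le_ext {D : ℕ} {R p a : ℝ} (h : NormalizedRegime p a) (hD : (D : ℝ) - 3 = p ^ 6) (hR0 : 0 < R)
    (hR : R ^ 2 = a ^ 2 + p ^ 6) (u : ℝ) :
    CofD D * (a * (Real.exp (-2) / 2 *
      (if |u - a| ≤ p / 2 then Real.exp (-(a ^ 2 / p ^ 6 * (u - a) ^ 2)) else 0) -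
      if u < 0 then 9 else 0)) ≤ negDHext D 1 R u := by
  have hp := h.p_pos
  have ha := h.a_pos
  have hm : 0 < p ^ 6 := by positivity
  have hC : 0 < CofD D := CofD_pos (by linarith)
  have hpa : p ≤ a := by nlinarith [h.lo, h.hp]
  by_cases hw : |u - a| ≤ p / 2
  · obtain ⟨hw1, hw2⟩ := abs_le.1 hw
    have hu2 : a / 2 ≤ u := by linarith
    have hu0 : 0 < u := by linarith
    rw [if_pos hw, if_neg (by linarith), sub_zero]
    obtain ⟨hy, hl⟩ := le_lexp h hw
    have e : -(2 * a * (u - a) + (u - a) ^ 2) = a ^ 2 - u ^ 2 := by ring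
    rw [e] at hy hl
    have huR : u ^ 2 < R ^ 2 := by
      have := (abs_le.1 hy).1
      rw [le_div_iff₀ hm] at this
      linarith
    have huR' : u < R := lt_of_pow_lt_pow_left₀ 2 hR0.le huR
    unfold negDHext
    rw [if_neg (by linarith), if_pos ⟨hu0, huR'⟩, negDH_one_eq hp hD hR huR]
    apply mul_le_mul_of_nonneg_left _ hC.le
    calc a * (Real.exp (-2) / 2 * Real.exp (-(a ^ 2 / p ^ 6 * (u - a) ^ 2)))
        = a / 2 * Real.exp (-(a ^ 2 / p ^ 6 * (u - a) ^ 2) - 2) := by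
          rw [sub_eq_add_neg _ (2 : ℝ), Real.exp_add]; ring
      _ ≤ _ := by gcongr
  · rw [if_neg hw]
    by_cases h1 : u < 0
    · rw [if_pos h1]
      have := (abs_le.1 (abs_ext_le h hD hR u)).1
      linarith
    · rw [if_neg h1]
      simp only [mul_zero, sub_zero]
      unfold negDHext
      rw [if_neg h1]
      split_ifs with h2
      · exact (negDH_one_le_const h hD hR h2.1 (by nlinarith)).1
      · exact le_rfl

lemma measurable_negDHext (D : ℕ) (σ R : ℝ) : Measurable (negDHext D σ R) := by
  have h : Measurable (negDH D σ R) := by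
    unfold negDH
    fun_prop
  unfold negDHext
  refine Measurable.ite measurableSet_Iio ?_ ?_
  · refine (Measurable.ite ?_ (h.comp measurable_neg) measurable_const).neg
    exact (measurableSet_lt measurable_const measurable_neg).inter
      (measurableSet_lt measurable_neg measurable_const)
  · refine Measurable.ite ?_ h measurable_const
    exact measurableSet_Ioo

/-! ### Gaussian bumps -/

/-- The Gaussian `exp (-b (v - c)²)` divided by `√(2π)`; it has mass `1/√(2b)`. -/
noncomputable def bump (b c v : ℝ) : ℝ :=
  1 / Real.sqrt (2 * Real.pi) * Real.exp (-b * (v - c) ^ 2)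

lemma integrable_bump {b : ℝ} (hb : 0 < b) (c : ℝ) : Integrable (bump b c) :=
  ((integrable_exp_neg_mul_sq hb).comp_sub_right c).const_mul _

lemma integral_bump {b : ℝ} (hb : 0 < b) (c : ℝ) : ∫ v, bump b c v = 1 / Real.sqrt (2 * b) := by
  unfold bump
  rw [integral_const_mul, integral_sub_right_eq_self (fun v : ℝ => Real.exp (-b * v ^ 2)) c,
    integral_gaussian, Real.sqrt_div Real.pi_pos.le, Real.sqrt_mul (by norm_num),
    Real.sqrt_mul (by norm_num)]
  have := Real.sqrt_pos.2 Real.pi_pos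
  field_simp

lemma bump_nonneg (b c v : ℝ) : 0 ≤ bump b c v := by unfold bump; positivity

/-- On the tail `|v - c| ≥ q`, half of the exponent gives a small factor and the other half remains
integrable. -/
lemma bump_tail {b c v q : ℝ} (hb : 0 ≤ b) (hq : 0 ≤ q) (hv : q ≤ |v - c|) :
    bump b c v ≤ Real.exp (-(b / 2 * q ^ 2)) * bump (b / 2) c v := by
  unfold bump
  have h2 : q ^ 2 ≤ (v - c) ^ 2 := by
    rw [← sq_abs (v - c)]; gcongr
  rw [mul_left_comm, ← Real.exp_add]
  gcongr
  nlinarith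

lemma bump_pdf (v : ℝ) : gaussPdf 1 v = bump (1 / 2) 0 v := by
  unfold gaussPdf bump
  ring_nf

/-- Completing the square in the product of the two Gaussians. -/
lemma bump_mul {β d : ℝ} (hβ : 0 < β) (v : ℝ) :
    gaussPdf 1 v * Real.exp (-(β * (d - v) ^ 2)) =
      Real.exp (-(β / (1 + 2 * β) * d ^ 2)) * bump (β + 1 / 2) (2 * β * d / (1 + 2 * β)) v := by
  unfold gaussPdf bump
  rw [mul_assoc, ← Real.exp_add, mul_left_comm, ← Real.exp_add, mul_one]
  congr 2
  field_simp
  ring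

/-! ### The convolution for `σ = 1` -/

lemma integrable_conv {D : ℕ} {R p a : ℝ} (h : NormalizedRegime p a) (hD : (D : ℝ) - 3 = p ^ 6)
    (hR : R ^ 2 = a ^ 2 + p ^ 6) (s : ℝ) :
    Integrable (fun v => gaussPdf 1 v * negDHext D 1 R (s - v)) := by
  have hg : Integrable (fun v => gaussPdf 1 v) := by
    simp_rw [bump_pdf]
    exact integrable_bump (by norm_num) 0
  refine hg.mul_bdd (c := CofD D * (a * 9)) ?_ ?_
  · exact ((measurable_negDHext D 1 R).comp (measurable_const.sub measurable_id)).aestronglyMeasurable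
  · exact Filter.Eventually.of_forall fun v => abs_ext_le h hD hR _

lemma conv_integrand_le {D : ℕ} {R p a s : ℝ} (h : NormalizedRegime p a) (hD : (D : ℝ) - 3 = p ^ 6)
    (hR : R ^ 2 = a ^ 2 + p ^ 6) (hs : |s - a| ≤ p / 6) {β : ℝ} (hβ : β = a ^ 2 / p ^ 6) (v : ℝ) :
    gaussPdf 1 v * negDHext D 1 R (s - v) ≤ CofD D * a *
      (Real.exp 2 * Real.exp (-(β / (1 + 2 * β) * (s - a) ^ 2)) *
          bump (β + 1 / 2) (2 * β * (s - a) / (1 + 2 * β)) v +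
        Real.exp (-(p ^ 2 / 36)) * bump (1 / 2 / 2) 0 v) := by
  have hp := h.p_pos
  have ha := h.a_pos
  have hC : 0 < CofD D := CofD_pos (by have : 0 < p ^ 6 := by positivity
                                       linarith)
  have hβ0 : 0 < β := by rw [hβ]; positivity
  obtain ⟨hs1, hs2⟩ := abs_le.1 hs
  have hg : 0 ≤ gaussPdf 1 v := by rw [bump_pdf]; exact bump_nonneg _ _ _
  have h1 := mul_le_mul_of_nonneg_left (ext_le h hD hR (s - v)) hg
  rw [← hβ] at h1
  have e : s - v - a = s - a - v := by ring
  rw [e] at h1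
  have h2 := bump_mul (d := s - a) hβ0 v
  have h3 : gaussPdf 1 v * (if s - a - v < -(p / 2) then (1 : ℝ) else 0) ≤
      Real.exp (-(p ^ 2 / 36)) * bump (1 / 2 / 2) 0 v := by
    split_ifs with hc
    · rw [bump_pdf, mul_one]
      have := bump_tail (b := 1 / 2) (c := 0) (v := v) (q := p / 3) (by norm_num) (by positivity)
        (by rw [sub_zero]; exact le_trans (by linarith) (le_abs_self v))
      convert this using 3
      ring
    · rw [mul_zero]
      exact mul_nonneg (Real.exp_pos _).le (bump_nonneg _ _ _)
  calc _ ≤ _ := h1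
    _ = CofD D * a * (Real.exp 2 * (gaussPdf 1 v * Real.exp (-(β * (s - a - v) ^ 2))) +
        gaussPdf 1 v * (if s - a - v < -(p / 2) then (1 : ℝ) else 0)) := by ring
    _ ≤ _ := by
      rw [h2, mul_assoc (Real.exp 2)]
      gcongr

lemma le_conv_integrand {D : ℕ} {R p a s : ℝ} (h : NormalizedRegime p a) (hD : (D : ℝ) - 3 = p ^ 6)
    (hR0 : 0 < R)
    (hR : R ^ 2 = a ^ 2 + p ^ 6) (hs : |s - a| ≤ p / 6) {β : ℝ} (hβ : β = a ^ 2 / p ^ 6) (v : ℝ) :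
    CofD D * a *
      (Real.exp (-2) / 2 * Real.exp (-(β / (1 + 2 * β) * (s - a) ^ 2)) *
          (bump (β + 1 / 2) (2 * β * (s - a) / (1 + 2 * β)) v -
            Real.exp (-((β + 1 / 2) / 2 * (p / 3) ^ 2)) *
              bump ((β + 1 / 2) / 2) (2 * β * (s - a) / (1 + 2 * β)) v) -
        9 * (Real.exp (-(1 / 2 / 2 * (5 * p ^ 2) ^ 2)) * bump (1 / 2 / 2) 0 v)) ≤
    gaussPdf 1 v * negDHext D 1 R (s - v) := by
  have hp := h.p_pos
  have ha := h.a_pos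
  have hC : 0 < CofD D := CofD_pos (by have : 0 < p ^ 6 := by positivity
                                       linarith)
  have hβ0 : 0 < β := by rw [hβ]; positivity
  obtain ⟨hs1, hs2⟩ := abs_le.1 hs
  have hg : 0 ≤ gaussPdf 1 v := by rw [bump_pdf]; exact bump_nonneg _ _ _
  have h1 := mul_le_mul_of_nonneg_left (le_ext h hD hR0 hR (s - v)) hg
  rw [← hβ] at h1
  have e : s - v - a = s - a - v := by ring
  rw [e] at h1
  have h2 := bump_mul (d := s - a) hβ0 v
  have h3 : gaussPdf 1 v * (if s - v < 0 then (9 : ℝ) else 0) ≤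
      9 * (Real.exp (-(1 / 2 / 2 * (5 * p ^ 2) ^ 2)) * bump (1 / 2 / 2) 0 v) := by
    split_ifs with hc
    · rw [bump_pdf, mul_comm]
      have h5 : 5 * p ^ 2 ≤ v := by nlinarith [h.lo, h.hp]
      have := bump_tail (b := 1 / 2) (c := 0) (v := v) (q := 5 * p ^ 2) (by norm_num) (by positivity)
        (by rw [sub_zero]; exact le_trans h5 (le_abs_self v))
      linarith
    · rw [mul_zero]
      exact mul_nonneg (by norm_num) (mul_nonneg (Real.exp_pos _).le (bump_nonneg _ _ _))
  have h4 : Real.exp (-(β / (1 + 2 * β) * (s - a) ^ 2)) *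
          (bump (β + 1 / 2) (2 * β * (s - a) / (1 + 2 * β)) v -
            Real.exp (-((β + 1 / 2) / 2 * (p / 3) ^ 2)) *
              bump ((β + 1 / 2) / 2) (2 * β * (s - a) / (1 + 2 * β)) v) ≤
      gaussPdf 1 v * (if |s - a - v| ≤ p / 2 then Real.exp (-(β * (s - a - v) ^ 2)) else 0) := by
    split_ifs with hc
    · rw [h2]
      gcongr
      have := mul_nonneg (Real.exp_pos (-((β + 1 / 2) / 2 * (p / 3) ^ 2))).le
        (bump_nonneg ((β + 1 / 2) / 2) (2 * β * (s - a) / (1 + 2 * β)) v)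
      linarith
    · rw [mul_zero]
      apply mul_nonpos_of_nonneg_of_nonpos (Real.exp_pos _).le
      -- outside the window, `v` is far from the centre of the product Gaussian
      have hq : p / 3 ≤ |v - 2 * β * (s - a) / (1 + 2 * β)| := by
        have e1 : v - 2 * β * (s - a) / (1 + 2 * β) = (s - a) / (1 + 2 * β) - (s - a - v) := by
          field_simp; ring
        have e2 : |(s - a) / (1 + 2 * β)| ≤ |s - a| := by
          rw [abs_div]
          apply div_le_self (abs_nonneg _)
          rw [abs_of_pos (by positivity)]; linarith
        rw [e1, abs_sub_comm]
        have := abs_sub_abs_le_abs_sub (s - a - v) ((s - a) / (1 + 2 * β))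
        linarith [not_le.1 hc]
      have := bump_tail (b := β + 1 / 2) (by positivity) (by positivity) hq
      linarith
  refine le_trans ?_ h1
  calc _ ≤ CofD D * a * (Real.exp (-2) / 2 *
        (gaussPdf 1 v * (if |s - a - v| ≤ p / 2 then Real.exp (-(β * (s - a - v) ^ 2)) else 0)) -
        gaussPdf 1 v * (if s - v < 0 then (9 : ℝ) else 0)) := by
        rw [mul_assoc (Real.exp (-2) / 2)]
        gcongr
    _ = _ := by ring

set_option maxHeartbeats 1000000 in
/-- The theorem for `σ = 1`; with `β = 1/(2ν²)` one has `ν/ν̄ = 1/√(1+2β)` and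
`1/(2ν̄²) = β/(1+2β)`. -/
lemma conv_one_bounds {D : ℕ} {R p a s : ℝ} (h : NormalizedRegime p a) (hD : (D : ℝ) - 3 = p ^ 6)
    (hR0 : 0 < R) (hR : R ^ 2 = a ^ 2 + p ^ 6) (hs : |s - a| ≤ p / 6)
    {β : ℝ} (hβ : β = a ^ 2 / p ^ 6) :
    1 / (16 * Real.exp 1) * (CofD D * a * (1 / Real.sqrt (1 + 2 * β) *
        Real.exp (-(β / (1 + 2 * β) * (s - a) ^ 2)))) ≤ gaussConv 1 (negDHext D 1 R) s ∧
    gaussConv 1 (negDHext D 1 R) s ≤ 9 * Real.exp 1 * (CofD D * a * (1 / Real.sqrt (1 + 2 * β) *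
        Real.exp (-(β / (1 + 2 * β) * (s - a) ^ 2)))) := by
  have hp := h.p_pos
  have ha := h.a_pos
  have hp2 := h.hp
  have hC : 0 < CofD D := CofD_pos (by have : 0 < p ^ 6 := by positivity
                                       linarith)
  have hβ0 : 0 < β := by rw [hβ]; positivity
  have hβ4 : β ≤ 4 := by
    rw [hβ, div_le_iff₀ (by positivity)]
    calc a ^ 2 ≤ (7 / 4 * p ^ 3) ^ 2 := by have := h.hi; gcongr
      _ ≤ _ := by nlinarith [show 0 < p ^ 6 by positivity]
  have hb : 0 < β + 1 / 2 := by positivity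
  have hconv := integrable_conv h hD hR s
  set ρ := 1 / Real.sqrt (1 + 2 * β) with hρ
  set A := Real.exp (-(β / (1 + 2 * β) * (s - a) ^ 2)) with hA
  have hA0 : 0 < A := Real.exp_pos _
  have hρ3 : 1 / 3 ≤ ρ := by
    rw [hρ]
    apply one_div_le_one_div_of_le (by positivity)
    rw [Real.sqrt_le_left (by norm_num)]
    linarith
  have hρ0 : 0 < ρ := by linarith
  have hs2 : √2 ≤ 3 / 2 := by rw [Real.sqrt_le_left (by norm_num)]; norm_num
  have hs0 : 0 < √2 := by positivity
  have I1 : ∫ v, bump (β + 1 / 2) (2 * β * (s - a) / (1 + 2 * β)) v = ρ := by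
    rw [integral_bump hb, hρ]; ring_nf
  have I2 : ∫ v, bump ((β + 1 / 2) / 2) (2 * β * (s - a) / (1 + 2 * β)) v = √2 * ρ := by
    rw [integral_bump (by positivity), hρ]
    have : 1 + 2 * β = 2 * (2 * ((β + 1 / 2) / 2)) := by ring
    rw [this, Real.sqrt_mul (by norm_num) (2 * ((β + 1 / 2) / 2))]
    field_simp
  have I3 : ∫ v, bump (1 / 2 / 2) 0 v = √2 := by
    rw [integral_bump (by norm_num)]
    have : (2 : ℝ) * (1 / 2 / 2) = 1 / 2 := by norm_num
    rw [this, Real.sqrt_div (by norm_num), Real.sqrt_one, one_div_one_div]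
  have J1 := integrable_bump hb (2 * β * (s - a) / (1 + 2 * β))
  have J2 := integrable_bump (half_pos hb) (2 * β * (s - a) / (1 + 2 * β))
  have J3 := integrable_bump (show (0 : ℝ) < 1 / 2 / 2 by norm_num) 0
  have hd2 : (s - a) ^ 2 ≤ p ^ 2 / 36 := by
    rw [← sq_abs]
    calc |s - a| ^ 2 ≤ (p / 6) ^ 2 := by gcongr
      _ = _ := by ring
  have hγ : β / (1 + 2 * β) * (s - a) ^ 2 ≤ p ^ 2 / 72 := by
    have : β / (1 + 2 * β) ≤ 1 / 2 := by
      rw [div_le_iff₀ (by positivity)]; linarith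
    nlinarith [sq_nonneg (s - a)]
  have hT1 : Real.exp (-(p ^ 2 / 36)) ≤ A := Real.exp_le_exp.2 (by nlinarith)
  have hT2 : Real.exp (-((β + 1 / 2) / 2 * (p / 3) ^ 2)) ≤ 1 / 4 := by
    calc Real.exp (-((β + 1 / 2) / 2 * (p / 3) ^ 2)) ≤ Real.exp (-2) := by
          apply Real.exp_le_exp.2
          nlinarith [sq_nonneg p]
      _ ≤ 1 / 4 := by
        rw [Real.exp_neg, ← one_div]
        apply one_div_le_one_div_of_le (by norm_num)
        have : Real.exp 2 = Real.exp 1 * Real.exp 1 := by rw [← Real.exp_add]; norm_num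
        nlinarith [Real.exp_one_gt_d9]
  have hT3 : Real.exp (-(1 / 2 / 2 * (5 * p ^ 2) ^ 2)) ≤ A * (1 / 5000) := by
    have h5 : Real.exp (-5000) ≤ 1 / 5000 := by
      rw [Real.exp_neg, ← one_div]
      apply one_div_le_one_div_of_le (by norm_num)
      linarith [Real.add_one_le_exp (5000 : ℝ)]
    calc Real.exp (-(1 / 2 / 2 * (5 * p ^ 2) ^ 2)) ≤ A * Real.exp (-5000) := by
          rw [hA, ← Real.exp_add]
          apply Real.exp_le_exp.2
          nlinarith
      _ ≤ _ := by gcongr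
  have he1 := Real.exp_one_gt_d9
  constructor
  · have hmono := integral_mono (((((J1.sub (J2.const_mul
        (Real.exp (-((β + 1 / 2) / 2 * (p / 3) ^ 2))))).const_mul (Real.exp (-2) / 2 * A)).sub
        ((J3.const_mul (Real.exp (-(1 / 2 / 2 * (5 * p ^ 2) ^ 2)))).const_mul 9))).const_mul
        (CofD D * a)) hconv (fun v => le_conv_integrand h hD hR0 hR hs hβ v)
    refine le_trans ?_ hmono
    simp only [Pi.sub_apply]
    have J12 : Integrable (fun v => bump (β + 1 / 2) (2 * β * (s - a) / (1 + 2 * β)) v -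
        Real.exp (-((β + 1 / 2) / 2 * (p / 3) ^ 2)) *
          bump ((β + 1 / 2) / 2) (2 * β * (s - a) / (1 + 2 * β)) v) := J1.sub (J2.const_mul _)
    rw [integral_const_mul, integral_sub (J12.const_mul _)
      ((J3.const_mul _).const_mul 9), integral_const_mul, integral_sub J1 (J2.const_mul _),
      integral_const_mul, integral_const_mul, integral_const_mul, I1, I2, I3]
    rw [mul_left_comm]
    apply mul_le_mul_of_nonneg_left _ (by positivity)
    have k1 : 1 / (16 * Real.exp 1) ≤ 1 / 40 := by
      apply one_div_le_one_div_of_le (by norm_num); linarith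
    have k2 : 2 / 15 ≤ Real.exp (-2) := by
      rw [Real.exp_neg, ← one_div]
      rw [le_div_iff₀ (Real.exp_pos _)]
      linarith [exp_two_lt]
    have k3 : 5 / 8 * ρ ≤ ρ - Real.exp (-((β + 1 / 2) / 2 * (p / 3) ^ 2)) * (√2 * ρ) := by
      have : Real.exp (-((β + 1 / 2) / 2 * (p / 3) ^ 2)) * (√2 * ρ) ≤ 1 / 4 * (3 / 2 * ρ) := by
        gcongr
      linarith
    have k4 : 9 * (Real.exp (-(1 / 2 / 2 * (5 * p ^ 2) ^ 2)) * √2) ≤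
        9 * ((A * (1 / 5000)) * (3 / 2 * (3 * ρ))) := by
      gcongr
      linarith
    calc 1 / (16 * Real.exp 1) * (ρ * A) ≤ 1 / 40 * (ρ * A) := by gcongr
      _ ≤ (2 / 15) / 2 * A * (5 / 8 * ρ) - 9 * ((A * (1 / 5000)) * (3 / 2 * (3 * ρ))) := by
        linarith [mul_pos hρ0 hA0]
      _ ≤ _ := by gcongr
  · have hmono := integral_mono hconv (((J1.const_mul (Real.exp 2 * A)).add
        (J3.const_mul (Real.exp (-(p ^ 2 / 36))))).const_mul (CofD D * a))
        (fun v => conv_integrand_le h hD hR hs hβ v)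
    refine le_trans hmono ?_
    simp only [Pi.add_apply]
    rw [integral_const_mul, integral_add (J1.const_mul _) (J3.const_mul _),
      integral_const_mul, integral_const_mul, I1, I3, mul_left_comm]
    apply mul_le_mul_of_nonneg_left _ (by positivity)
    have k1 : Real.exp (-(p ^ 2 / 36)) * √2 ≤ A * (3 / 2 * (3 * ρ)) := by
      gcongr
      linarith
    have k2 := exp_two_lt
    have k3 : Real.exp 2 * A * ρ ≤ 15 / 2 * A * ρ := by gcongr
    have k4 : 24 * (ρ * A) ≤ 9 * Real.exp 1 * (ρ * A) := by
      apply mul_le_mul_of_nonneg_right _ (by positivity)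
      linarith
    linarith [mul_pos hρ0 hA0]

/-! ### Reduction to `σ = 1` -/

lemma negDHext_scale (D : ℕ) {σ : ℝ} (hσ : 0 < σ) (R t : ℝ) :
    negDHext D σ R t = 1 / σ * negDHext D 1 (R / σ) (t / σ) := by
  have hn : ∀ u, negDH D σ R u = 1 / σ * negDH D 1 (R / σ) (u / σ) := by
    intro u
    unfold negDH
    have e : ((R / σ) ^ 2 - (u / σ) ^ 2) / (2 * 1 ^ 2) = (R ^ 2 - u ^ 2) / (2 * σ ^ 2) := by
      field_simp
    rw [e]
    field_simp
  have h1 : t / σ < 0 ↔ t < 0 := by rw [div_lt_iff₀ hσ, zero_mul]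
  have h2 : 0 < t / σ ↔ 0 < t := div_pos_iff_of_pos_right hσ
  have h3 : t / σ < R / σ ↔ t < R := div_lt_div_iff_of_pos_right hσ
  have h4 : -(t / σ) = -t / σ := by ring
  have h5 : -t / σ < R / σ ↔ -t < R := div_lt_div_iff_of_pos_right hσ
  have h6 : 0 < -t / σ ↔ 0 < -t := div_pos_iff_of_pos_right hσ
  unfold negDHext
  simp only [h4, h1, h2, h3, h5, h6, hn]
  split_ifs <;> ring

lemma gaussConv_scale (D : ℕ) {σ : ℝ} (hσ : 0 < σ) (R s : ℝ) :
    gaussConv σ (negDHext D σ R) s = 1 / σ * gaussConv 1 (negDHext D 1 (R / σ)) (s / σ) := by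
  unfold gaussConv
  have e : ∀ v, gaussPdf σ v * negDHext D σ R (s - v) = 1 / σ ^ 2 *
      (fun x => gaussPdf 1 x * negDHext D 1 (R / σ) (s / σ - x)) (v / σ) := by
    intro v
    rw [negDHext_scale D hσ, sub_div]
    unfold gaussPdf
    have e2 : -(v / σ) ^ 2 / (2 * 1 ^ 2) = -v ^ 2 / (2 * σ ^ 2) := by field_simp
    simp only [e2]
    field_simp
  simp_rw [e]
  rw [integral_const_mul, Measure.integral_comp_div
    (fun x => gaussPdf 1 x * negDHext D 1 (R / σ) (s / σ - x)), abs_of_pos hσ, smul_eq_mul]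
  field_simp

/-- **Upper and lower bounds on `φ ∗ (-h')`.**  With `s⋆ = √(R² - σ²(D-3))`,
`ν² = σ⁴(D-3)/(2s⋆²)`, `ν̄ = √(ν² + σ²)`, if `D > (48 log 6)³ + 3` and
`24 log 6 · σ² D^(2/3) ≤ s⋆² ≤ 3σ²D`, then for `|s - s⋆| ≤ (1/6)σ(D-3)^(1/6)`,
`(1/(16e)) C(D) (ν/ν̄)(s⋆/σ²) exp(-(s-s⋆)²/(2ν̄²)) ≤ [φ ∗ (-h')](s)
  ≤ 9e C(D) (ν/ν̄)(s⋆/σ²) exp(-(s-s⋆)²/(2ν̄²))`. -/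
theorem gauss_conv_neg_h_deriv_bounds (D : ℕ)
    (hD : (48 * Real.log 6) ^ 3 + 3 < (D : ℝ)) (σ R : ℝ)
    (hσ : 0 < σ) (hR : 0 < R) (hRD : σ ^ 2 * ((D : ℝ) - 3) < R ^ 2)
    (sstar ν νbar : ℝ)
    (hsstar : sstar = Real.sqrt (R ^ 2 - σ ^ 2 * ((D : ℝ) - 3)))
    (hν : ν = Real.sqrt (σ ^ 4 * ((D : ℝ) - 3) / (2 * sstar ^ 2)))
    (hνbar : νbar = Real.sqrt (ν ^ 2 + σ ^ 2))
    (hlow : 24 * Real.log 6 * σ ^ 2 * (D : ℝ) ^ ((2 : ℝ) / 3) ≤ sstar ^ 2)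
    (hhigh : sstar ^ 2 ≤ 3 * σ ^ 2 * D)
    (s : ℝ) (hs : |s - sstar| ≤ (1 / 6) * σ * ((D : ℝ) - 3) ^ ((1 : ℝ) / 6)) :
    (1 / (16 * Real.exp 1)) * CofD D * (ν / νbar) * (sstar / σ ^ 2) *
        Real.exp (-(s - sstar) ^ 2 / (2 * νbar ^ 2)) ≤
      gaussConv σ (negDHext D σ R) s ∧
    gaussConv σ (negDHext D σ R) s ≤
      9 * Real.exp 1 * CofD D * (ν / νbar) * (sstar / σ ^ 2) *
        Real.exp (-(s - sstar) ^ 2 / (2 * νbar ^ 2)) := by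
  have hlog : 5 / 3 ≤ Real.log 6 := by
    rw [Real.le_log_iff_exp_le (by norm_num)]
    have h1 : Real.exp (5 / 3) ^ 3 = Real.exp 1 ^ 5 := by
      rw [← Real.exp_nat_mul, ← Real.exp_nat_mul]; norm_num
    have h2 : Real.exp 1 ^ 5 ≤ 6 ^ 3 := by
      calc Real.exp 1 ^ 5 ≤ (2.75 : ℝ) ^ 5 := by
            have := Real.exp_one_lt_d9
            gcongr
            linarith
        _ ≤ _ := by norm_num
    exact le_of_pow_le_pow_left₀ (n := 3) (by norm_num) (by norm_num) (h1 ▸ h2)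
  have hm80 : (80 : ℝ) ^ 3 < (D : ℝ) - 3 := by
    have : (80 : ℝ) ^ 3 ≤ (48 * Real.log 6) ^ 3 := by gcongr; linarith
    linarith
  have hm0 : 0 < (D : ℝ) - 3 := lt_trans (by norm_num) hm80
  obtain ⟨p, hpdef⟩ : ∃ p, p = ((D : ℝ) - 3) ^ ((1 : ℝ) / 6) := ⟨_, rfl⟩
  have hp0 : 0 < p := by rw [hpdef]; positivity
  have hp6 : (D : ℝ) - 3 = p ^ 6 := by
    rw [hpdef, ← Real.rpow_natCast, ← Real.rpow_mul hm0.le]; norm_num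
  have hp2 : 80 ≤ p ^ 2 := by
    apply le_of_pow_le_pow_left₀ (n := 3) (by norm_num) (by positivity)
    calc (80 : ℝ) ^ 3 ≤ p ^ 6 := by rw [← hp6]; exact hm80.le
      _ = _ := by ring
  have hp4 : p ^ 4 ≤ (D : ℝ) ^ ((2 : ℝ) / 3) := by
    have : p ^ 4 = ((D : ℝ) - 3) ^ ((2 : ℝ) / 3) := by
      rw [hpdef, ← Real.rpow_natCast, ← Real.rpow_mul hm0.le]; norm_num
    rw [this]
    exact Real.rpow_le_rpow hm0.le (by linarith) (by norm_num)
  have hss0 : 0 < sstar := by rw [hsstar]; apply Real.sqrt_pos.2; linarith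
  have hss2 : sstar ^ 2 = R ^ 2 - σ ^ 2 * p ^ 6 := by
    rw [hsstar, Real.sq_sqrt (by linarith), hp6]
  obtain ⟨a, rfl⟩ : ∃ a, sstar = σ * a := ⟨sstar / σ, by field_simp⟩
  have ha : 0 < a := pos_of_mul_pos_right hss0 hσ.le
  have hreg : NormalizedRegime p a := by
    refine ⟨hp2, hp0, ha, ?_, ?_⟩
    · apply le_of_pow_le_pow_left₀ (n := 2) (by norm_num) ha.le
      have h1 : 24 * (5 / 3) * σ ^ 2 * p ^ 4 ≤ (σ * a) ^ 2 := by
        refine le_trans ?_ hlow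
        gcongr
      have h2 : σ ^ 2 * (40 * p ^ 4) ≤ σ ^ 2 * a ^ 2 := by linarith
      have h3 := le_of_mul_le_mul_left h2 (by positivity)
      nlinarith [show 0 < p ^ 4 by positivity]
    · apply le_of_pow_le_pow_left₀ (n := 2) (by norm_num) (by positivity)
      have h2 : σ ^ 2 * a ^ 2 ≤ σ ^ 2 * (3 * (p ^ 6 + 3)) := by rw [← hp6]; linarith
      have h3 := le_of_mul_le_mul_left h2 (by positivity)
      have : (80 : ℝ) ^ 3 < p ^ 6 := hp6 ▸ hm80
      nlinarith
  have hR2 : (R / σ) ^ 2 = a ^ 2 + p ^ 6 := by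
    rw [div_pow, div_eq_iff (by positivity)]; linarith
  have hs' : |s / σ - a| ≤ p / 6 := by
    have : s / σ - a = (s - σ * a) / σ := by field_simp
    rw [this, abs_div, abs_of_pos hσ, div_le_iff₀ hσ, hpdef]
    linarith
  obtain ⟨β, hβ⟩ : ∃ β, β = a ^ 2 / p ^ 6 := ⟨_, rfl⟩
  have hβ0 : 0 < β := by rw [hβ]; positivity
  have hν2 : ν ^ 2 = σ ^ 2 / (2 * β) := by
    rw [hν, hp6, Real.sq_sqrt (by positivity), hβ]
    field_simp
  have hν0 : 0 ≤ ν := by rw [hν]; exact Real.sqrt_nonneg _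
  have hνb2 : νbar ^ 2 = σ ^ 2 * (1 + 2 * β) / (2 * β) := by
    rw [hνbar, Real.sq_sqrt (by positivity), hν2]
    field_simp
  have hνb0 : 0 < νbar := by rw [hνbar]; apply Real.sqrt_pos.2; positivity
  have hratio : ν / νbar = 1 / Real.sqrt (1 + 2 * β) := by
    rw [← Real.sqrt_sq (show 0 ≤ ν / νbar by positivity), div_pow, hν2, hνb2,
      ← Real.sqrt_one, ← Real.sqrt_div zero_le_one, Real.sqrt_one]
    congr 1
    field_simp
  have hexp : -(s - σ * a) ^ 2 / (2 * νbar ^ 2) = -(β / (1 + 2 * β) * (s / σ - a) ^ 2) := by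
    rw [hνb2]
    field_simp
  obtain ⟨h1, h2⟩ := conv_one_bounds hreg hp6 (div_pos hR hσ) hR2 hs' hβ
  rw [gaussConv_scale D hσ, hratio, hexp]
  have hσ1 : 0 ≤ 1 / σ := by positivity
  have key : ∀ c : ℝ, c * CofD D * (1 / Real.sqrt (1 + 2 * β)) * (σ * a / σ ^ 2) *
      Real.exp (-(β / (1 + 2 * β) * (s / σ - a) ^ 2)) = 1 / σ * (c * (CofD D * a *
        (1 / Real.sqrt (1 + 2 * β) * Real.exp (-(β / (1 + 2 * β) * (s / σ - a) ^ 2))))) := by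
    intro c
    have : σ * a / σ ^ 2 = 1 / σ * a := by field_simp
    rw [this]; ring
  rw [key, key]
  exact ⟨mul_le_mul_of_nonneg_left h1 hσ1, mul_le_mul_of_nonneg_left h2 hσ1⟩
end

section
/- Let D be an integer with D > (576 log 2)³ + 3 and σ, R > 0 with R² > σ²(D−1). Set s⋆ = √(R² − σ²(D−3)), š⋆ = √(R² − σ²(D−1)), and ν̌² = σ⁴(D−1)/(2š⋆²). Suppose 576 log(2) · σ² D^{2/3} ≤ s⋆² ≤ 3σ²D. Then the convolution [φ ∗ h](s) satisfies [φ ∗ h](s) ≤ 1 for all 0 ≤ s < š⋆, and [φ ∗ h](s) ≤ 4 · exp(−(s − š⋆)²/(2(ν̌² + σ²))) for all s ≥ š⋆. -/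
/-!
Up to scaling, `[φ ∗ h](s)` is a noncentral chi-square probability, and both bounds come from a
single Chernoff argument, with constant `1` in place of `4`.

Write `a = (D - 1)/2` and `c = š⋆`.  Inserting `1 ≤ e^(μ (T - t))` into the incomplete Gamma
integral up to `T` gives `e^(μT) (1 + μ)^(-a)`, and `log (1 + μ) ≥ μ - μ²/2` turns this into
`exp (μ (T - a) + a μ²/2)`.  For `T = (R² - t²)/(2σ²)` and `c² = R² - 2aσ²`, the convexity bound
`t² ≥ 2tc - c²` linearises the exponent in `t`: for every `θ ≥ 0` and every real `t`,
`h t ≤ exp (θ² ν̌²/2 - θ (t - c))` (`hFun_le_exp`).  Integrating against the Gaussian density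
(an exponential tilt shifts the Gaussian) gives
`[φ ∗ h](s) ≤ exp (θ² (ν̌² + σ²)/2 - θ (s - c))` (`gaussConv_le_exp`).
Then `θ = 0` yields the first bound and the optimal `θ = (s - c)/(ν̌² + σ²)` the second.
-/

open MeasureTheory

/-- `h(s) = (1/Γ((D-1)/2)) ∫₀^{max{0,(R²-s²)/(2σ²)}} t^((D-3)/2) e^(-t) dt`, the
probability that a chi-square random variable with `D-1` degrees of freedom is at
most `(R² - s²)/σ²`. -/
noncomputable def hFun (D : ℕ) (σ R : ℝ) (s : ℝ) : ℝ :=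
  (1 / Real.Gamma (((D : ℝ) - 1) / 2)) *
    ∫ t in (0 : ℝ)..(max 0 ((R ^ 2 - s ^ 2) / (2 * σ ^ 2))),
      t ^ (((D : ℝ) - 3) / 2) * Real.exp (-t)

/-- Chernoff bound for the lower tail of the Gamma distribution with shape `a`. -/
lemma lower_gamma_le {a μ T : ℝ} (ha : 0 < a) (hμ : 0 ≤ μ) :
    1 / Real.Gamma a * ∫ t in (0 : ℝ)..(max 0 T), t ^ (a - 1) * Real.exp (-t) ≤
      Real.exp (μ * (T - a) + a * μ ^ 2 / 2) := by
  have hΓ := Real.Gamma_pos_of_pos ha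
  rcases le_or_gt T 0 with hT | hT
  · rw [max_eq_left hT, intervalIntegral.integral_same, mul_zero]
    positivity
  rw [max_eq_right hT.le, intervalIntegral.integral_of_le hT.le]
  have hμ1 : 0 < 1 + μ := by linarith
  have key := Real.integral_rpow_mul_exp_neg_mul_Ioi ha hμ1
  -- The tilted integrand is integrable, as its integral is nonzero.
  have hint : IntegrableOn (fun t : ℝ => t ^ (a - 1) * Real.exp (-((1 + μ) * t)))
      (Set.Ioi 0) := by
    apply MeasureTheory.Integrable.of_integral_ne_zero
    rw [key]
    positivity
  have h1 : ∫ t in Set.Ioc 0 T, t ^ (a - 1) * Real.exp (-t) ≤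
      ∫ t in Set.Ioc 0 T, Real.exp (μ * T) * (t ^ (a - 1) * Real.exp (-((1 + μ) * t))) := by
    apply integral_mono_of_nonneg
    · filter_upwards [ae_restrict_mem measurableSet_Ioc] with t ht
      have := ht.1
      simp only [Pi.zero_apply]
      positivity
    · exact (hint.mono_set Set.Ioc_subset_Ioi_self).const_mul _
    · filter_upwards [ae_restrict_mem measurableSet_Ioc] with t ht
      have h0 := ht.1
      have h2 : Real.exp (-t) ≤ Real.exp (μ * T) * Real.exp (-((1 + μ) * t)) := by
        rw [← Real.exp_add, Real.exp_le_exp]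
        nlinarith [mul_le_mul_of_nonneg_left ht.2 hμ]
      calc t ^ (a - 1) * Real.exp (-t)
          ≤ t ^ (a - 1) * (Real.exp (μ * T) * Real.exp (-((1 + μ) * t))) := by gcongr
        _ = _ := by ring
  have h2 : ∫ t in Set.Ioc 0 T, t ^ (a - 1) * Real.exp (-((1 + μ) * t)) ≤
      ∫ t in Set.Ioi 0, t ^ (a - 1) * Real.exp (-((1 + μ) * t)) := by
    apply setIntegral_mono_set hint
    · filter_upwards [ae_restrict_mem measurableSet_Ioi] with t ht
      have : 0 < t := ht
      simp only [Pi.zero_apply]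
      positivity
    · exact Filter.Eventually.of_forall Set.Ioc_subset_Ioi_self
  have hlog : μ - μ ^ 2 / 2 ≤ Real.log (1 + μ) := by
    refine le_trans ?_ (Real.le_log_one_add_of_nonneg hμ)
    rw [le_div_iff₀ (by linarith)]
    nlinarith [pow_nonneg hμ 3]
  have h3 : (1 / (1 + μ)) ^ a ≤ Real.exp (-a * (μ - μ ^ 2 / 2)) := by
    rw [Real.rpow_def_of_pos (by positivity), Real.exp_le_exp, one_div, Real.log_inv]
    nlinarith
  rw [integral_const_mul] at h1
  rw [key] at h2
  calc 1 / Real.Gamma a * ∫ t in Set.Ioc 0 T, t ^ (a - 1) * Real.exp (-t)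
      ≤ 1 / Real.Gamma a *
          (Real.exp (μ * T) * (Real.exp (-a * (μ - μ ^ 2 / 2)) * Real.Gamma a)) := by
        refine mul_le_mul_of_nonneg_left (h1.trans ?_) (by positivity)
        refine mul_le_mul_of_nonneg_left (h2.trans ?_) (by positivity)
        exact mul_le_mul_of_nonneg_right h3 hΓ.le
    _ = Real.exp (μ * T) * Real.exp (-a * (μ - μ ^ 2 / 2)) := by
        field_simp
    _ = _ := by
        rw [← Real.exp_add]
        congr 1
        ring

lemma hFun_nonneg {D : ℕ} (hD : 1 < (D : ℝ)) (σ R s : ℝ) : 0 ≤ hFun D σ R s := by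
  unfold hFun
  have hΓ : 0 < Real.Gamma (((D : ℝ) - 1) / 2) := Real.Gamma_pos_of_pos (by linarith)
  refine mul_nonneg (by positivity) ?_
  refine intervalIntegral.integral_nonneg (le_max_left _ _) fun t ht => ?_
  have := ht.1
  positivity

/-- The log-linear majorants of `h`.  With `c = š⋆` and `w = ν̌²`, their infimum over `θ ≥ 0` is the
one-sided Gaussian profile `exp (-(t - c)₊²/(2w))`. -/
lemma hFun_le_exp {D : ℕ} (hD : 1 < (D : ℝ)) {σ R c w θ : ℝ} (hσ : 0 < σ) (hc : 0 < c)
    (hc2 : c ^ 2 = R ^ 2 - σ ^ 2 * ((D : ℝ) - 1))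
    (hw : w = σ ^ 4 * ((D : ℝ) - 1) / (2 * c ^ 2)) (hθ : 0 ≤ θ) (t : ℝ) :
    hFun D σ R t ≤ Real.exp (θ ^ 2 * w / 2 - θ * (t - c)) := by
  have hμ : 0 ≤ θ * σ ^ 2 / c := by positivity
  have h := lower_gamma_le (a := ((D : ℝ) - 1) / 2) (T := (R ^ 2 - t ^ 2) / (2 * σ ^ 2))
    (by linarith) hμ
  have he : ((D : ℝ) - 1) / 2 - 1 = ((D : ℝ) - 3) / 2 := by ring
  rw [he] at h
  refine h.trans (Real.exp_le_exp.2 ?_)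
  have hR : R ^ 2 = c ^ 2 + σ ^ 2 * ((D : ℝ) - 1) := by linarith
  -- The two exponents differ exactly by the linearisation error of `t²` at `c`.
  have hdiff : θ ^ 2 * w / 2 - θ * (t - c) -
      (θ * σ ^ 2 / c * ((R ^ 2 - t ^ 2) / (2 * σ ^ 2) - ((D : ℝ) - 1) / 2) +
        ((D : ℝ) - 1) / 2 * (θ * σ ^ 2 / c) ^ 2 / 2) = θ * (t - c) ^ 2 / (2 * c) := by
    rw [hw, hR]
    field_simp
    ring
  have : 0 ≤ θ * (t - c) ^ 2 / (2 * c) := by positivity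
  linarith

/-- An exponential tilt of the Gaussian density is a rescaled shifted Gaussian density. -/
lemma gaussPdf_mul_exp {σ : ℝ} (hσ : 0 < σ) (A B v : ℝ) :
    gaussPdf σ v * Real.exp (A + B * v) =
      Real.exp (A + σ ^ 2 * B ^ 2 / 2) *
        ProbabilityTheory.gaussianPDFReal (σ ^ 2 * B) (Real.toNNReal (σ ^ 2)) v := by
  unfold gaussPdf ProbabilityTheory.gaussianPDFReal
  rw [Real.coe_toNNReal _ (sq_nonneg σ),
    Real.sqrt_mul (x := 2 * Real.pi) (by positivity) (σ ^ 2), Real.sqrt_sq hσ.le,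
    one_div, mul_assoc, ← Real.exp_add, mul_left_comm, ← Real.exp_add]
  congr 2
  field_simp
  ring

lemma gaussConv_le_exp {D : ℕ} (hD : 1 < (D : ℝ)) {σ R c w θ : ℝ} (hσ : 0 < σ) (hc : 0 < c)
    (hc2 : c ^ 2 = R ^ 2 - σ ^ 2 * ((D : ℝ) - 1))
    (hw : w = σ ^ 4 * ((D : ℝ) - 1) / (2 * c ^ 2)) (hθ : 0 ≤ θ) (s : ℝ) :
    gaussConv σ (hFun D σ R) s ≤ Real.exp (θ ^ 2 * (w + σ ^ 2) / 2 - θ * (s - c)) := by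
  have hpos : ∀ v, 0 ≤ gaussPdf σ v := fun v => by unfold gaussPdf; positivity
  have hv : Real.toNNReal (σ ^ 2) ≠ 0 := by
    rw [Ne, Real.toNNReal_eq_zero, not_le]
    positivity
  calc gaussConv σ (hFun D σ R) s
      ≤ ∫ v : ℝ, Real.exp (θ ^ 2 * w / 2 - θ * (s - c) + σ ^ 2 * θ ^ 2 / 2) *
          ProbabilityTheory.gaussianPDFReal (σ ^ 2 * θ) (Real.toNNReal (σ ^ 2)) v := by
        unfold gaussConv
        apply integral_mono_of_nonneg
        · exact Filter.Eventually.of_forall fun v =>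
            mul_nonneg (hpos v) (hFun_nonneg hD σ R _)
        · exact (ProbabilityTheory.integrable_gaussianPDFReal _ _).const_mul _
        · refine Filter.Eventually.of_forall fun v => ?_
          simp only
          rw [← gaussPdf_mul_exp hσ]
          refine mul_le_mul_of_nonneg_left ?_ (hpos v)
          refine (hFun_le_exp hD hσ hc hc2 hw hθ (s - v)).trans (le_of_eq ?_)
          congr 1
          ring
    _ = _ := by
        rw [integral_const_mul, ProbabilityTheory.integral_gaussianPDFReal_eq_one _ hv, mul_one]
        congr 1
        ring

/-- **Upper bounds on `φ ∗ h`.**  With `s⋆ = √(R² - σ²(D-3))`,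
`š⋆ = √(R² - σ²(D-1))`, `ν̌² = σ⁴(D-1)/(2š⋆²)`, if `D > (576 log 2)³ + 3` and
`576 log 2 · σ² D^(2/3) ≤ s⋆² ≤ 3σ²D`, then `[φ ∗ h](s) ≤ 1` for `0 ≤ s < š⋆` and
`[φ ∗ h](s) ≤ 4 exp(-(s - š⋆)²/(2(ν̌² + σ²)))` for `s ≥ š⋆`. -/
theorem gauss_conv_h_upper_bounds (D : ℕ)
    (hD : (576 * Real.log 2) ^ 3 + 3 < (D : ℝ)) (σ R : ℝ)
    (hσ : 0 < σ) (hR : 0 < R) (hRD : σ ^ 2 * ((D : ℝ) - 1) < R ^ 2)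
    (sstar scheck νcheck : ℝ)
    (hsstar : sstar = Real.sqrt (R ^ 2 - σ ^ 2 * ((D : ℝ) - 3)))
    (hscheck : scheck = Real.sqrt (R ^ 2 - σ ^ 2 * ((D : ℝ) - 1)))
    (hνcheck : νcheck = Real.sqrt (σ ^ 4 * ((D : ℝ) - 1) / (2 * scheck ^ 2)))
    (hlow : 576 * Real.log 2 * σ ^ 2 * (D : ℝ) ^ ((2 : ℝ) / 3) ≤ sstar ^ 2)
    (hhigh : sstar ^ 2 ≤ 3 * σ ^ 2 * D) :
    (∀ s : ℝ, 0 ≤ s → s < scheck → gaussConv σ (hFun D σ R) s ≤ 1) ∧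
    (∀ s : ℝ, scheck ≤ s →
      gaussConv σ (hFun D σ R) s ≤
        4 * Real.exp (-(s - scheck) ^ 2 / (2 * (νcheck ^ 2 + σ ^ 2)))) := by
  have hlog : 0 ≤ Real.log 2 := Real.log_nonneg (by norm_num)
  have hD1 : 1 < (D : ℝ) := by
    have : 0 ≤ (576 * Real.log 2) ^ 3 := by positivity
    linarith
  have hc : 0 < scheck := by
    rw [hscheck]
    exact Real.sqrt_pos.2 (by linarith)
  have hc2 : scheck ^ 2 = R ^ 2 - σ ^ 2 * ((D : ℝ) - 1) := by
    rw [hscheck, Real.sq_sqrt (by linarith)]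
  have hw : νcheck ^ 2 = σ ^ 4 * ((D : ℝ) - 1) / (2 * scheck ^ 2) := by
    have : 0 ≤ (D : ℝ) - 1 := by linarith
    rw [hνcheck, Real.sq_sqrt (by positivity)]
  refine ⟨fun s _ _ => ?_, fun s hs => ?_⟩
  · simpa using gaussConv_le_exp hD1 hσ hc hc2 hw le_rfl s
  · have hV : 0 < νcheck ^ 2 + σ ^ 2 := by positivity
    have hθ : 0 ≤ (s - scheck) / (νcheck ^ 2 + σ ^ 2) := div_nonneg (by linarith) hV.le
    have h := gaussConv_le_exp hD1 hσ hc hc2 hw hθ s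
    have he : ((s - scheck) / (νcheck ^ 2 + σ ^ 2)) ^ 2 * (νcheck ^ 2 + σ ^ 2) / 2 -
        (s - scheck) / (νcheck ^ 2 + σ ^ 2) * (s - scheck) =
        -(s - scheck) ^ 2 / (2 * (νcheck ^ 2 + σ ^ 2)) := by
      field_simp
      ring
    rw [he] at h
    linarith [Real.exp_pos (-(s - scheck) ^ 2 / (2 * (νcheck ^ 2 + σ ^ 2)))]
end

section
/- Let D ≥ 2 be an integer and σ, R > 0 with R² > σ²(D−1). Set š⋆ = √(R² − σ²(D−1)) and ν̌² = σ⁴(D−1)/(2š⋆²). Then for every s > š⋆, one has h(s) ≤ exp(−(s − š⋆)²/(2ν̌²)). -/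
/-!
With `a = (D-1)/2` and `x = (R² - s²)/(2σ²)`, `h(s)` is the regularized lower incomplete Gamma
function at `x`. The Chernoff method bounds it for every `l ≥ 0`: inserting
`e^{-t} ≤ e^{lx} e^{-(1+l)t}` on `(0, x]` and extending the integral to `(0, ∞)` gives
`e^{lx} (1+l)^{-a}` (`lower_gamma_chernoff`). Since `log (1+l) ≥ l - l²/2`, the choice
`l = (a-x)/a` yields `exp(-(a-x)²/(2a))` (`lower_gamma_subgaussian`), which is the chi-square
lower-tail bound. Finally `a - x = (s² - š⋆²)/(2σ²)`, and `s > š⋆` gives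
`(s² - š⋆²)² ≥ 4 š⋆² (s - š⋆)²`.
-/

open MeasureTheory

lemma lower_gamma_chernoff {a x l : ℝ} (ha : 0 < a) (hx : 0 ≤ x) (hl : 0 ≤ l) :
    ∫ t in (0 : ℝ)..x, t ^ (a - 1) * Real.exp (-t) ≤
      Real.exp (l * x) * ((1 / (1 + l)) ^ a * Real.Gamma a) := by
  have hr : 0 < 1 + l := by linarith
  have hG := Real.integral_rpow_mul_exp_neg_mul_Ioi ha hr
  -- A nonzero Bochner integral forces integrability.
  have hint : IntegrableOn (fun t : ℝ => t ^ (a - 1) * Real.exp (-((1 + l) * t)))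
      (Set.Ioi 0) := by
    by_contra hne
    have h0 := integral_undef hne
    rw [hG] at h0
    have := Real.Gamma_pos_of_pos ha
    have : 0 < (1 / (1 + l)) ^ a * Real.Gamma a := by positivity
    linarith
  rw [intervalIntegral.integral_of_le hx, ← hG, ← integral_const_mul]
  have hint2 := hint.const_mul (Real.exp (l * x))
  calc ∫ t in Set.Ioc 0 x, t ^ (a - 1) * Real.exp (-t)
      ≤ ∫ t in Set.Ioc 0 x, Real.exp (l * x) * (t ^ (a - 1) * Real.exp (-((1 + l) * t))) := by
        apply integral_mono_of_nonneg
        · filter_upwards [ae_restrict_mem measurableSet_Ioc] with t ht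
          have := ht.1
          simp only [Pi.zero_apply]
          positivity
        · exact IntegrableOn.mono_set hint2 Set.Ioc_subset_Ioi_self
        · filter_upwards [ae_restrict_mem measurableSet_Ioc] with t ht
          have h0 := ht.1
          have h1 := ht.2
          have hp : 0 ≤ t ^ (a - 1) := by positivity
          have he : Real.exp (-t) ≤ Real.exp (l * x) * Real.exp (-((1 + l) * t)) := by
            rw [← Real.exp_add, Real.exp_le_exp]
            nlinarith
          calc t ^ (a - 1) * Real.exp (-t)
              ≤ t ^ (a - 1) * (Real.exp (l * x) * Real.exp (-((1 + l) * t))) := by gcongr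
            _ = _ := by ring
    _ ≤ _ := by
        apply setIntegral_mono_set hint2
        · filter_upwards [ae_restrict_mem measurableSet_Ioi] with t ht
          have : 0 < t := ht
          simp only [Pi.zero_apply]
          positivity
        · exact Set.Ioc_subset_Ioi_self.eventuallyLE

/-- The chi-square lower-tail bound `P[X ≤ E[X] - t] ≤ exp(-t²/(4(D-1)))`, in terms of the
Gamma shape `a = (D-1)/2` and `x = a - t/2`. -/
lemma lower_gamma_subgaussian {a x : ℝ} (ha : 0 < a) (hx : 0 ≤ x) (hxa : x ≤ a) :
    (1 / Real.Gamma a) * ∫ t in (0 : ℝ)..x, t ^ (a - 1) * Real.exp (-t) ≤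
      Real.exp (-(a - x) ^ 2 / (2 * a)) := by
  have hGpos := Real.Gamma_pos_of_pos ha
  obtain ⟨l, hl⟩ : ∃ l, l = (a - x) / a := ⟨_, rfl⟩
  have hl0 : 0 ≤ l := hl ▸ div_nonneg (by linarith) ha.le
  have hr : 0 < 1 + l := by linarith
  have hlog : l - l ^ 2 / 2 ≤ Real.log (1 + l) := by
    refine le_trans ?_ (Real.le_log_one_add_of_nonneg hl0)
    rw [le_div_iff₀ (by linarith)]
    have : 0 ≤ l ^ 3 := by positivity
    nlinarith
  have hpow : (1 / (1 + l)) ^ a = Real.exp (-(a * Real.log (1 + l))) := by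
    rw [Real.rpow_def_of_pos (by positivity), one_div, Real.log_inv]
    ring_nf
  have hxl : x = a - l * a := by rw [hl]; field_simp; ring
  calc (1 / Real.Gamma a) * ∫ t in (0 : ℝ)..x, t ^ (a - 1) * Real.exp (-t)
      ≤ (1 / Real.Gamma a) * (Real.exp (l * x) * ((1 / (1 + l)) ^ a * Real.Gamma a)) := by
        gcongr
        exact lower_gamma_chernoff ha hx hl0
    _ = Real.exp (l * x + -(a * Real.log (1 + l))) := by
        rw [hpow, Real.exp_add]; field_simp
    _ ≤ _ := by
        rw [Real.exp_le_exp]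
        have h1 : -(a - x) ^ 2 / (2 * a) = -(a * l ^ 2 / 2) := by
          rw [hxl]; field_simp; ring
        rw [h1, hxl]
        nlinarith [mul_le_mul_of_nonneg_left hlog ha.le]

/-- **Subgaussian upper tail for `h`.**  With `š⋆ = √(R² - σ²(D-1))` and
`ν̌² = σ⁴(D-1)/(2š⋆²)`, for every `s > š⋆` one has
`h(s) ≤ exp(-(s - š⋆)²/(2ν̌²))`. -/
theorem h_tail_bound (D : ℕ) (hD : 2 ≤ D) (σ R : ℝ)
    (hσ : 0 < σ) (hR : 0 < R) (hRD : σ ^ 2 * ((D : ℝ) - 1) < R ^ 2)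
    (scheck νcheck : ℝ)
    (hscheck : scheck = Real.sqrt (R ^ 2 - σ ^ 2 * ((D : ℝ) - 1)))
    (hνcheck : νcheck = Real.sqrt (σ ^ 4 * ((D : ℝ) - 1) / (2 * scheck ^ 2)))
    (s : ℝ) (hs : scheck < s) :
    hFun D σ R s ≤ Real.exp (-(s - scheck) ^ 2 / (2 * νcheck ^ 2)) := by
  have hn : (0 : ℝ) < (D : ℝ) - 1 := by
    have : (2 : ℝ) ≤ D := by exact_mod_cast hD
    linarith
  have hc : 0 < scheck := by rw [hscheck]; exact Real.sqrt_pos.2 (by linarith)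
  have hc2 : scheck ^ 2 = R ^ 2 - σ ^ 2 * ((D : ℝ) - 1) := by
    rw [hscheck]; exact Real.sq_sqrt (by linarith)
  have hν : νcheck ^ 2 = σ ^ 4 * ((D : ℝ) - 1) / (2 * scheck ^ 2) := by
    rw [hνcheck]; exact Real.sq_sqrt (by positivity)
  unfold hFun
  rcases le_total ((R ^ 2 - s ^ 2) / (2 * σ ^ 2)) 0 with hx | hx
  · rw [max_eq_left hx]
    simp only [intervalIntegral.integral_same, mul_zero]
    positivity
  · rw [max_eq_right hx]
    have hdiff : ((D : ℝ) - 1) / 2 - (R ^ 2 - s ^ 2) / (2 * σ ^ 2)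
        = (s ^ 2 - scheck ^ 2) / (2 * σ ^ 2) := by
      rw [hc2]; field_simp; ring
    have hsq : 0 ≤ s ^ 2 - scheck ^ 2 := by nlinarith
    have hxa : (R ^ 2 - s ^ 2) / (2 * σ ^ 2) ≤ ((D : ℝ) - 1) / 2 := by
      have : 0 ≤ (s ^ 2 - scheck ^ 2) / (2 * σ ^ 2) := by positivity
      linarith
    have key := lower_gamma_subgaussian (half_pos hn) hx hxa
    rw [show ((D : ℝ) - 1) / 2 - 1 = ((D : ℝ) - 3) / 2 by ring] at key
    refine key.trans (Real.exp_le_exp.2 ?_)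
    have e1 : -(((D : ℝ) - 1) / 2 - (R ^ 2 - s ^ 2) / (2 * σ ^ 2)) ^ 2 / (2 * (((D : ℝ) - 1) / 2))
        = -((s ^ 2 - scheck ^ 2) ^ 2 / 4) / (σ ^ 4 * ((D : ℝ) - 1)) := by
      rw [hdiff]; field_simp; ring
    have e2 : -(s - scheck) ^ 2 / (2 * νcheck ^ 2)
        = -((s - scheck) ^ 2 * scheck ^ 2) / (σ ^ 4 * ((D : ℝ) - 1)) := by
      rw [hν]; field_simp
    rw [e1, e2]
    apply div_le_div_of_nonneg_right _ (by positivity)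
    have h4 : (2 * scheck) ^ 2 ≤ (s + scheck) ^ 2 := by
      apply pow_le_pow_left₀ <;> linarith
    nlinarith [mul_le_mul_of_nonneg_left h4 (sq_nonneg (s - scheck))]
end

section
/- Let D ≥ 1, N ≥ 1 be integers, κ ≥ 0 a real number, and q ∈ ℝ^D. For i = 1, …, N let c_i : [0,1] → ℝ^D be twice continuously differentiable curves with c_i(0) = q and ‖c_i''(t)‖ ≤ κ ‖c_i'(0)‖² for all t ∈ [0,1], and let c_* : [0,1] → ℝ^D be a twice continuously differentiable curve with c_*(0) = q, c_*'(0) = (1/N) Σ_{i=1}^N c_i'(0), and ‖c_*''(t)‖ ≤ κ ‖c_*'(0)‖² for all t ∈ [0,1]. Then ‖ c_*(1) − (1/N) Σ_{i=1}^N c_i(1) ‖ ≤ (κ/N) Σ_{i=1}^N ‖c_i'(0)‖². -/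
/-!
Second-order Taylor expansion at `0` puts each endpoint `c_i(1)` within `κ‖c_i'(0)‖²/2` of
`q + c_i'(0)`, and `c_*(1)` within `κ‖c_*'(0)‖²/2` of `q + c_*'(0)` (`norm_taylor_one_le`).
Since `c_*'(0)` is the average of the `c_i'(0)`, the first-order terms cancel in
`c_*(1) - (1/N) ∑ c_i(1)`, and only the remainders are left. The remainders of the `c_i`
contribute half of the bound; the one of `c_*` contributes the other half, because
`‖c_*'(0)‖²` is at most the average of the `‖c_i'(0)‖²` by convexity (`sq_norm_average_le`).
-/

open Set

/-- First-order Taylor estimate on `[0, 1]` with the sharp remainder constant `1 / 2`. The sharp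
constant is needed: two such remainders must add up to a single factor `κ`. -/
lemma norm_taylor_one_le {E : Type*} [NormedAddCommGroup E] [NormedSpace ℝ E]
    {f f' f'' : ℝ → E} {C : ℝ}
    (hf : ∀ t ∈ Icc (0 : ℝ) 1, HasDerivWithinAt f (f' t) (Icc 0 1) t)
    (hf' : ∀ t ∈ Icc (0 : ℝ) 1, HasDerivWithinAt f' (f'' t) (Icc 0 1) t)
    (hC : ∀ t ∈ Icc (0 : ℝ) 1, ‖f'' t‖ ≤ C) :
    ‖f 1 - f 0 - f' 0‖ ≤ C / 2 := by
  have hvel : ∀ t ∈ Icc (0 : ℝ) 1, ‖f' t - f' 0‖ ≤ C * t := by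
    intro t ht
    simpa using norm_image_sub_le_of_norm_deriv_le_segment' hf'
      (fun s hs => hC s (Ico_subset_Icc_self hs)) t ht
  -- The fencing function `C t² / 2` has derivative `C t`, which dominates `‖f' t - f' 0‖`.
  have hB : ∀ t : ℝ, HasDerivAt (fun s : ℝ => C / 2 * s ^ 2) (C * t) t := by
    intro t
    refine ((hasDerivAt_pow 2 t).const_mul (C / 2)).congr_deriv ?_
    push_cast
    ring
  have hg : ∀ t ∈ Icc (0 : ℝ) 1,
      HasDerivWithinAt (fun s => f s - f 0 - s • f' 0) (f' t - f' 0) (Icc 0 1) t := by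
    intro t ht
    simpa [Pi.sub_def] using ((hf t ht).sub_const (f 0)).sub
      ((hasDerivWithinAt_id t (Icc (0 : ℝ) 1)).smul_const (f' 0))
  have key := image_norm_le_of_norm_deriv_right_le_deriv_boundary
    (fun t ht => (hg t ht).continuousWithinAt)
    (fun t ht => (hg t (Ico_subset_Icc_self ht)).mono_of_mem_nhdsWithin
      (Icc_mem_nhdsGE_of_mem ht))
    (by simp) hB (fun t ht => hvel t (Ico_subset_Icc_self ht))
    (right_mem_Icc.2 zero_le_one)
  simpa using key

lemma sq_norm_average_le {E : Type*} [NormedAddCommGroup E] [NormedSpace ℝ E]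
    {N : ℕ} (hN : 1 ≤ N) (v : Fin N → E) :
    ‖(N : ℝ)⁻¹ • ∑ i, v i‖ ^ 2 ≤ (N : ℝ)⁻¹ * ∑ i, ‖v i‖ ^ 2 := by
  have hN0 : (0 : ℝ) < N := by exact_mod_cast hN
  have hCS : (∑ i, ‖v i‖) ^ 2 ≤ N * ∑ i, ‖v i‖ ^ 2 := by
    simpa using sq_sum_le_card_mul_sum_sq (s := Finset.univ) (f := fun i => ‖v i‖)
  calc ‖(N : ℝ)⁻¹ • ∑ i, v i‖ ^ 2 = (N : ℝ)⁻¹ ^ 2 * ‖∑ i, v i‖ ^ 2 := by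
        rw [norm_smul, Real.norm_of_nonneg (inv_nonneg.2 hN0.le), mul_pow]
    _ ≤ (N : ℝ)⁻¹ ^ 2 * (N * ∑ i, ‖v i‖ ^ 2) := by
        gcongr
        exact (pow_le_pow_left₀ (norm_nonneg _) (norm_sum_le _ _) 2).trans hCS
    _ = (N : ℝ)⁻¹ * ∑ i, ‖v i‖ ^ 2 := by
        field_simp

/-- **Curve-level inequality underlying the signal-average lemma.**  Let
`c_i : [0,1] → ℝ^D` be twice continuously differentiable curves starting at `q`
with `‖c_i''(t)‖ ≤ κ‖c_i'(0)‖²`, and let `c_*` be a twice continuously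
differentiable curve with `c_*(0) = q`, `c_*'(0) = (1/N) ∑ c_i'(0)` and
`‖c_*''(t)‖ ≤ κ‖c_*'(0)‖²`.  Then
`‖c_*(1) - (1/N) ∑ c_i(1)‖ ≤ (κ/N) ∑ ‖c_i'(0)‖²`. -/
theorem curve_average_distance_bound (D N : ℕ) (hD : 1 ≤ D) (hN : 1 ≤ N)
    (κ : ℝ) (hκ : 0 ≤ κ) (q : EuclideanSpace ℝ (Fin D))
    (c c' c'' : Fin N → ℝ → EuclideanSpace ℝ (Fin D))
    (cs cs' cs'' : ℝ → EuclideanSpace ℝ (Fin D))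
    (hc0 : ∀ i, c i 0 = q)
    (hcd : ∀ i, ∀ t ∈ Icc (0 : ℝ) 1, HasDerivWithinAt (c i) (c' i t) (Icc 0 1) t)
    (hcd2 : ∀ i, ∀ t ∈ Icc (0 : ℝ) 1, HasDerivWithinAt (c' i) (c'' i t) (Icc 0 1) t)
    (hccont : ∀ i, ContinuousOn (c'' i) (Icc 0 1))
    (hcb : ∀ i, ∀ t ∈ Icc (0 : ℝ) 1, ‖c'' i t‖ ≤ κ * ‖c' i 0‖ ^ 2)
    (hcs0 : cs 0 = q)
    (hcsd : ∀ t ∈ Icc (0 : ℝ) 1, HasDerivWithinAt cs (cs' t) (Icc 0 1) t)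
    (hcsd2 : ∀ t ∈ Icc (0 : ℝ) 1, HasDerivWithinAt cs' (cs'' t) (Icc 0 1) t)
    (hcscont : ContinuousOn cs'' (Icc 0 1))
    (hcs'0 : cs' 0 = (N : ℝ)⁻¹ • ∑ i, c' i 0)
    (hcsb : ∀ t ∈ Icc (0 : ℝ) 1, ‖cs'' t‖ ≤ κ * ‖cs' 0‖ ^ 2) :
    ‖cs 1 - (N : ℝ)⁻¹ • ∑ i, c i 1‖ ≤ (κ / N) * ∑ i, ‖c' i 0‖ ^ 2 := by
  have hN0 : (0 : ℝ) < N := by exact_mod_cast hN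
  have hs : ‖cs 1 - q - cs' 0‖ ≤ κ * ‖cs' 0‖ ^ 2 / 2 := by
    simpa only [hcs0] using norm_taylor_one_le hcsd hcsd2 hcsb
  have hi : ∀ i, ‖c i 1 - q - c' i 0‖ ≤ κ * ‖c' i 0‖ ^ 2 / 2 := fun i => by
    simpa only [hc0] using norm_taylor_one_le (hcd i) (hcd2 i) (hcb i)
  have hJ : ‖cs' 0‖ ^ 2 ≤ (N : ℝ)⁻¹ * ∑ i, ‖c' i 0‖ ^ 2 := by
    rw [hcs'0]
    exact sq_norm_average_le hN _
  have hdecomp : cs 1 - (N : ℝ)⁻¹ • ∑ i, c i 1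
      = (cs 1 - q - cs' 0) - (N : ℝ)⁻¹ • ∑ i, (c i 1 - q - c' i 0) := by
    have hq : (N : ℝ)⁻¹ • ∑ _i : Fin N, q = q := by
      rw [Finset.sum_const, Finset.card_univ, Fintype.card_fin, ← Nat.cast_smul_eq_nsmul ℝ,
        inv_smul_smul₀ hN0.ne']
    rw [Finset.sum_sub_distrib, Finset.sum_sub_distrib, smul_sub, smul_sub, hq, ← hcs'0]
    abel
  have hsum : ‖(N : ℝ)⁻¹ • ∑ i, (c i 1 - q - c' i 0)‖
      ≤ (N : ℝ)⁻¹ * (κ / 2 * ∑ i, ‖c' i 0‖ ^ 2) := by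
    rw [norm_smul, Real.norm_of_nonneg (inv_nonneg.2 hN0.le), Finset.mul_sum]
    gcongr
    refine norm_sum_le_of_le _ fun i _ => (hi i).trans_eq ?_
    ring
  calc ‖cs 1 - (N : ℝ)⁻¹ • ∑ i, c i 1‖
      ≤ ‖cs 1 - q - cs' 0‖ + ‖(N : ℝ)⁻¹ • ∑ i, (c i 1 - q - c' i 0)‖ := by
        rw [hdecomp]
        exact norm_sub_le _ _
    _ ≤ κ * ((N : ℝ)⁻¹ * ∑ i, ‖c' i 0‖ ^ 2) / 2
        + (N : ℝ)⁻¹ * (κ / 2 * ∑ i, ‖c' i 0‖ ^ 2) := by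
        refine add_le_add (hs.trans ?_) hsum
        gcongr
    _ = (κ / N) * ∑ i, ‖c' i 0‖ ^ 2 := by
        ring
end

section
/- For every positive integer n, one has √(2π) · n^{n + 1/2} · e^{−n + 1/(12n+1)} ≤ n! ≤ √(2π) · n^{n + 1/2} · e^{−n + 1/(12n)}. Equivalently, n! = √(2π) n^{n+1/2} e^{−n + ε_n} for some ε_n with 1/(12n+1) ≤ ε_n ≤ 1/(12n). -/
/-!
Robbins' argument. Let `s n = n! / (√(2n) (n/e)^n)` be Mathlib's `Stirling.stirlingSeq`, which tends
to `√π`. The decrements of `log (s n)` satisfy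
`1/(12n+1) - 1/(12(n+1)+1) ≤ log (s n) - log (s (n+1)) ≤ 1/(12n) - 1/(12(n+1))`:
the upper bound is `Stirling.log_stirlingSeq_sdiff_le`, and the lower one already follows from the
first term `1/(3(2n+1)^2)` of the series of the decrement. Hence `log (s n) - 1/(12n+1)` decreases
and `log (s n) - 1/(12n)` increases, both towards `log √π`, and comparing each with its limit gives
the two bounds on `n!`.
-/

/-- The first term of the series for the decrement dominates the telescoping difference; with
`n = k+1` and `m = 2n+1` this amounts to `12m ≥ 35`, which holds as `n ≥ 1`. -/
lemma log_stirlingSeq_sdiff_ge (k : ℕ) :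
    1 / (12 * ((k : ℝ) + 1) + 1) - 1 / (12 * ((k : ℝ) + 2) + 1) ≤
      Real.log (Stirling.stirlingSeq (k + 1)) - Real.log (Stirling.stirlingSeq (k + 2)) := by
  have h := le_hasSum (Stirling.log_stirlingSeq_sdiff_hasSum k) 0 (fun j _ => by positivity)
  refine le_trans ?_ h
  have hk : (0 : ℝ) ≤ k := Nat.cast_nonneg k
  push_cast
  have e : (1 : ℝ) / (2 * 1 + 1) * ((1 / (2 * ((k : ℝ) + 1) + 1)) ^ 2) ^ 1 =
      1 / (3 * (2 * (k : ℝ) + 3) ^ 2) := by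
    rw [pow_one, div_pow, div_mul_div_comm]
    congr 1 <;> ring
  rw [e, div_sub_div _ _ (by positivity) (by positivity),
    div_le_div_iff₀ (by positivity) (by positivity)]
  nlinarith

lemma tendsto_log_stirlingSeq_sub {c : ℕ → ℝ} (hc : Filter.Tendsto c Filter.atTop (nhds 0)) :
    Filter.Tendsto (fun k : ℕ => Real.log (Stirling.stirlingSeq (k + 1)) - c k) Filter.atTop
      (nhds (Real.log (Real.sqrt Real.pi))) := by
  have h1 := (Stirling.tendsto_stirlingSeq_sqrt_pi.comp (Filter.tendsto_add_atTop_nat 1)).log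
    (by positivity)
  simpa using h1.sub hc

lemma log_stirlingSeq_lower (k : ℕ) :
    Real.log (Real.sqrt Real.pi) + 1 / (12 * ((k : ℝ) + 1) + 1) ≤
      Real.log (Stirling.stirlingSeq (k + 1)) := by
  have hc : Filter.Tendsto (fun k : ℕ => 1 / (12 * ((k : ℝ) + 1) + 1)) Filter.atTop (nhds 0) := by
    refine squeeze_zero (fun k => by positivity) (fun k => ?_)
      (tendsto_one_div_add_atTop_nhds_zero_nat (𝕜 := ℝ))
    have hk : (0 : ℝ) ≤ k := Nat.cast_nonneg k
    exact one_div_le_one_div_of_le (by positivity) (by linarith)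
  have hanti : Antitone (fun k : ℕ => Real.log (Stirling.stirlingSeq (k + 1)) -
      1 / (12 * ((k : ℝ) + 1) + 1)) := by
    refine antitone_nat_of_succ_le fun j => ?_
    have h := log_stirlingSeq_sdiff_ge j
    have e : ((j + 1 : ℕ) : ℝ) + 1 = j + 2 := by push_cast; ring
    rw [e]
    change Real.log (Stirling.stirlingSeq (j + 2)) - _ ≤ _
    linarith
  have := hanti.le_of_tendsto (tendsto_log_stirlingSeq_sub hc) k
  linarith

lemma log_stirlingSeq_upper (k : ℕ) :
    Real.log (Stirling.stirlingSeq (k + 1)) ≤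
      Real.log (Real.sqrt Real.pi) + 1 / (12 * ((k : ℝ) + 1)) := by
  have hc : Filter.Tendsto (fun k : ℕ => 1 / (12 * ((k : ℝ) + 1))) Filter.atTop (nhds 0) := by
    refine squeeze_zero (fun k => by positivity) (fun k => ?_)
      (tendsto_one_div_add_atTop_nhds_zero_nat (𝕜 := ℝ))
    have hk : (0 : ℝ) ≤ k := Nat.cast_nonneg k
    exact one_div_le_one_div_of_le (by positivity) (by linarith)
  have hmono : Monotone (fun k : ℕ => Real.log (Stirling.stirlingSeq (k + 1)) -
      1 / (12 * ((k : ℝ) + 1))) := by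
    refine monotone_nat_of_le_succ fun j => ?_
    have h := Stirling.log_stirlingSeq_sdiff_le (j + 1)
    have e : ((j + 1 : ℕ) : ℝ) + 1 = j + 2 := by push_cast; ring
    rw [e] at h ⊢
    push_cast at h
    have e2 : 1 / (12 * ((j : ℝ) + 1) * (j + 2)) =
        1 / (12 * ((j : ℝ) + 1)) - 1 / (12 * ((j : ℝ) + 2)) := by
      field_simp
      ring
    linarith
  have := hmono.ge_of_tendsto (tendsto_log_stirlingSeq_sub hc) k
  linarith

/-- The Stirling main term with exponent correction `ε`, in terms of its logarithm. -/
lemma stirling_main_term_eq (x ε : ℝ) (hx : 0 < x) :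
    Real.sqrt (2 * Real.pi) * x ^ (x + 1 / 2) * Real.exp (-x + ε) =
      Real.exp (Real.log (Real.sqrt Real.pi) + ε + 1 / 2 * Real.log (2 * x) +
        x * Real.log (x / Real.exp 1)) := by
  have h2 : Real.sqrt (2 * Real.pi) = Real.exp (Real.log 2 / 2 + Real.log (Real.sqrt Real.pi)) := by
    rw [Real.sqrt_mul (by norm_num), Real.exp_add, Real.exp_log (by positivity),
      ← Real.log_sqrt (by norm_num), Real.exp_log (by positivity)]
  rw [h2, Real.rpow_def_of_pos hx, ← Real.exp_add, ← Real.exp_add,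
    Real.log_mul (by norm_num) hx.ne', Real.log_div hx.ne' (Real.exp_ne_zero 1), Real.log_exp]
  congr 1
  ring

/-- **Refined two-sided Stirling approximation.**  For every positive integer `n`,
`√(2π) n^(n+1/2) e^(-n + 1/(12n+1)) ≤ n! ≤ √(2π) n^(n+1/2) e^(-n + 1/(12n))`. -/
theorem stirling_two_sided (n : ℕ) (hn : 0 < n) :
    Real.sqrt (2 * Real.pi) * (n : ℝ) ^ ((n : ℝ) + 1 / 2) *
        Real.exp (-(n : ℝ) + 1 / (12 * (n : ℝ) + 1)) ≤ (Nat.factorial n : ℝ) ∧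
    (Nat.factorial n : ℝ) ≤
      Real.sqrt (2 * Real.pi) * (n : ℝ) ^ ((n : ℝ) + 1 / 2) *
        Real.exp (-(n : ℝ) + 1 / (12 * (n : ℝ))) := by
  obtain ⟨k, rfl⟩ : ∃ k, n = k + 1 := ⟨n - 1, by omega⟩
  have hx : (0 : ℝ) < ((k + 1 : ℕ) : ℝ) := by exact_mod_cast hn
  have hf : (0 : ℝ) < (Nat.factorial (k + 1) : ℝ) := by exact_mod_cast Nat.factorial_pos _
  have hform := Stirling.log_stirlingSeq_formula (k + 1)
  have hl := log_stirlingSeq_lower k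
  have hu := log_stirlingSeq_upper k
  have e : (k : ℝ) + 1 = ((k + 1 : ℕ) : ℝ) := by push_cast; ring
  rw [e] at hl hu
  rw [stirling_main_term_eq _ _ hx, stirling_main_term_eq _ _ hx]
  constructor
  · rw [← Real.le_log_iff_exp_le hf]
    linarith
  · rw [← Real.log_le_iff_le_exp hf]
    linarith
end
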